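/- arXiv:1907.09069 — 2 statements merged into one kernel-verified Lean document; each statement's English description precedes it below -/
import Mathlib

section
/- Deodhar's parabolic Kazhdan–Lusztig polynomials of type −1 satisfy P^{J,−1}_{u,v}(q) = P_{w_J u, w_J v}(q) for all u, v ∈ ᴶW, where P_{x,w} are the ordinary Kazhdan–Lusztig polynomials and w_J is the longest element of W_J. In particular P^{J,−1}_{u,v} has constant term 1 whenever u ≤ v. -/
open scoped Classical Polynomial

variable {B W : Type*} [Group W] {M : CoxeterMatrix B}

/-- `ᴶW`: the minimal length right coset representatives of `W_J` in `W`,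
characterized by `ℓ(s w) > ℓ(w)` for all `s ∈ J`. -/
def cosetReps (cs : CoxeterSystem M W) (J : Set B) : Set W :=
  {w | ∀ i ∈ J, cs.length w < cs.length (cs.simple i * w)}

/-- The Bruhat order on a Coxeter group, via the subword property. -/
def bruhatLE (cs : CoxeterSystem M W) (x y : W) : Prop :=
  ∃ ω : List B, cs.IsReduced ω ∧ cs.wordProd ω = y ∧
    ∃ ω' : List B, ω'.Sublist ω ∧ cs.IsReduced ω' ∧ cs.wordProd ω' = x

/-- `q^N P(1/q)` for a polynomial `P` of degree at most `N`. -/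
noncomputable def invPoly (N : ℕ) (P : Polynomial ℤ) : Polynomial ℤ :=
  Polynomial.X ^ (N - P.natDegree) * P.reverse

/-- Deodhar's parabolic Kazhdan–Lusztig data of type `y ∈ {-1, q}` for a (finite)
Coxeter system and a subset `J ⊆ S`:  families `R = R^{J,y}` and `P = P^{J,y}` of
polynomials indexed by elements of `ᴶW` satisfying Deodhar's defining conditions.
Taking `J = ∅` recovers the ordinary `R`- and Kazhdan–Lusztig polynomials. -/
structure ParabolicKL [Fintype W] (cs : CoxeterSystem M W) (J : Set B)
    (y : Polynomial ℤ) where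
  R : W → W → Polynomial ℤ
  P : W → W → Polynomial ℤ
  R_eq_zero : ∀ u ∈ cosetReps cs J, ∀ v ∈ cosetReps cs J,
    ¬ bruhatLE cs u v → R u v = 0
  R_refl : ∀ u ∈ cosetReps cs J, R u u = 1
  R_rec : ∀ u ∈ cosetReps cs J, ∀ v ∈ cosetReps cs J, bruhatLE cs u v → u ≠ v →
    ∀ i : B, cs.length (v * cs.simple i) < cs.length v →
      (cs.length (u * cs.simple i) < cs.length u →
        R u v = R (u * cs.simple i) (v * cs.simple i))
      ∧ (cs.length u < cs.length (u * cs.simple i) →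
          u * cs.simple i ∈ cosetReps cs J →
        R u v = (Polynomial.X - 1) * R u (v * cs.simple i)
          + Polynomial.X * R (u * cs.simple i) (v * cs.simple i))
      ∧ (cs.length u < cs.length (u * cs.simple i) →
          u * cs.simple i ∉ cosetReps cs J →
        R u v = (Polynomial.X - 1 - y) * R u (v * cs.simple i))
  P_eq_zero : ∀ u ∈ cosetReps cs J, ∀ v ∈ cosetReps cs J,
    ¬ bruhatLE cs u v → P u v = 0
  P_refl : ∀ u ∈ cosetReps cs J, P u u = 1
  P_degree : ∀ u ∈ cosetReps cs J, ∀ v ∈ cosetReps cs J, bruhatLE cs u v → u ≠ v →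
    2 * (P u v).natDegree + 1 ≤ cs.length v - cs.length u
  P_inversion : ∀ u ∈ cosetReps cs J, ∀ v ∈ cosetReps cs J, bruhatLE cs u v →
    invPoly (cs.length v - cs.length u) (P u v)
      = ∑ z ∈ Finset.univ.filter
          (fun z => z ∈ cosetReps cs J ∧ bruhatLE cs u z ∧ bruhatLE cs z v),
        R u z * P z v

/-! ### Strong exchange -/

/-- The generator action used for the strong exchange condition. -/
noncomputable def sxAct (cs : CoxeterSystem M W) (i : B) : Function.End (W × ZMod 2) :=
  fun p => (cs.simple i * p.1 * cs.simple i, p.2 + if p.1 = cs.simple i then 1 else 0)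

lemma sx_mul {X : Type*} (f g : Function.End X) (p : X) : (f * g) p = f (g p) := rfl

lemma sx_one {X : Type*} (p : X) : (1 : Function.End X) p = p := rfl

lemma sx_conj_pow (cs : CoxeterSystem M W) (i j : B) (k : ℕ) :
    (cs.simple i * cs.simple j) ^ k * cs.simple j * (cs.simple i * cs.simple j) ^ k
      = cs.simple j := by
  induction k with
  | zero => simp
  | succ k ih =>
    have h : (cs.simple i * cs.simple j) * cs.simple j * (cs.simple i * cs.simple j)
      = cs.simple j := by simp [mul_assoc]
    calc _ = (cs.simple i * cs.simple j) ^ k * ((cs.simple i * cs.simple j) * cs.simple j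
          * (cs.simple i * cs.simple j)) * (cs.simple i * cs.simple j) ^ k := by
          nth_rw 1 [pow_succ]; rw [pow_succ']; simp only [mul_assoc]
      _ = _ := by rw [h, ih]

lemma sx_pow (cs : CoxeterSystem M W) (i j : B) (n : ℕ) (t : W) (e : ZMod 2) :
    ((sxAct cs i * sxAct cs j) ^ n) (t, e) =
      ((cs.simple i * cs.simple j) ^ n * t * ((cs.simple i * cs.simple j) ^ n)⁻¹,
        e + ∑ r ∈ Finset.range (2 * n),
          if t = cs.simple j * (cs.simple i * cs.simple j) ^ r then 1 else 0) := by
  induction n with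
  | zero => simp [sx_one]
  | succ n ih =>
    rw [pow_succ', sx_mul, ih, sx_mul]
    simp only [sxAct]
    set a := cs.simple i * cs.simple j with ha
    have h1 : a ^ n * cs.simple j * a ^ n = cs.simple j := sx_conj_pow cs i j n
    have e1 : (a ^ n * t * (a ^ n)⁻¹ = cs.simple j) ↔ t = cs.simple j * a ^ (2 * n) := by
      rw [mul_inv_eq_iff_eq_mul]
      constructor
      · intro h
        have : a ^ n * t = a ^ n * (cs.simple j * a ^ (2*n)) := by
          rw [h, two_mul, pow_add, ← mul_assoc, ← mul_assoc, h1]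
        exact mul_left_cancel this
      · rintro rfl
        rw [two_mul, pow_add, ← mul_assoc, ← mul_assoc, h1]
    have e2 : (cs.simple j * (a ^ n * t * (a ^ n)⁻¹) * cs.simple j = cs.simple i) ↔
        t = cs.simple j * a ^ (2 * n + 1) := by
      have h3 : (cs.simple j * (a ^ n * t * (a ^ n)⁻¹) * cs.simple j = cs.simple i) ↔
          a ^ n * t = cs.simple j * a * a ^ n := by
        rw [← mul_inv_eq_iff_eq_mul]
        constructor
        · intro h
          have h5 : ∀ y : W, y = cs.simple j * (cs.simple j * y * cs.simple j) * cs.simple j := by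
            intro y; simp [mul_assoc]
          rw [h5 (a ^ n * t * (a ^ n)⁻¹), h, ha, mul_assoc]
        · intro h
          rw [h, ha]
          simp [mul_assoc]
      rw [h3]
      have h4 : a ^ n * (cs.simple j * a ^ (2 * n + 1)) = cs.simple j * a * a ^ n := by
        rw [mul_assoc, ← pow_succ', two_mul, add_assoc, pow_add, ← mul_assoc, ← mul_assoc, h1]
      constructor
      · intro h
        rw [← h4] at h
        exact mul_left_cancel h
      · rintro rfl
        exact h4
    refine Prod.ext ?_ ?_
    · rw [pow_succ', ha]
      simp [mul_assoc]
    · simp only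
      rw [show 2 * (n + 1) = 2 * n + 1 + 1 by ring, Finset.sum_range_succ, Finset.sum_range_succ]
      simp only [e1, e2]
      ring

lemma sx_liftable (cs : CoxeterSystem M W) : M.IsLiftable (sxAct cs) := by
  intro i j
  funext p
  obtain ⟨t, e⟩ := p
  rw [sx_pow, sx_one]
  have h := cs.simple_mul_simple_pow i j
  rw [h, two_mul, Finset.sum_range_add]
  have h2 : ∀ x : ZMod 2, x + x = 0 := by decide
  simp [pow_add, h, h2]

lemma sx_word (cs : CoxeterSystem M W) (ω : List B) (t : W) (e : ZMod 2) :
    (cs.lift ⟨sxAct cs, sx_liftable cs⟩ (cs.wordProd ω)) (t, e)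
      = (cs.wordProd ω * t * (cs.wordProd ω)⁻¹, e + ((cs.rightInvSeq ω).count t : ZMod 2)) := by
  induction ω with
  | nil => simp [sx_one]
  | cons i ω ih =>
    rw [cs.wordProd_cons, map_mul, sx_mul, ih,
      cs.lift_apply_simple]
    simp only [sxAct, CoxeterSystem.rightInvSeq]
    have e1 : (cs.wordProd ω * t * (cs.wordProd ω)⁻¹ = cs.simple i) ↔
        (cs.wordProd ω)⁻¹ * cs.simple i * cs.wordProd ω = t := by
      constructor
      · intro h; rw [← h]; group
      · rintro rfl; group
    refine Prod.ext ?_ ?_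
    · simp [mul_assoc]
    · simp only [e1, List.count_cons, beq_iff_eq]
      push_cast
      ring

lemma strong_exchange_mem (cs : CoxeterSystem M W) (ω : List B) (t : W)
    (ht : cs.IsReflection t) (hl : cs.length (cs.wordProd ω * t) < cs.length (cs.wordProd ω)) :
    t ∈ cs.rightInvSeq ω := by
  set φ := cs.lift ⟨sxAct cs, sx_liftable cs⟩ with hφ
  have htt : ∀ e, φ t (t, e) = (t, e + 1) := by
    intro e
    obtain ⟨u, i, htu⟩ := ht
    have h1 : φ u (φ u⁻¹ (t, e)) = (t, e) := by
      have h0 : (φ u * φ u⁻¹) (t, e) = (t, e) := by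
        rw [← map_mul, mul_inv_cancel, map_one, sx_one]
      exact h0
    have h2 : t = u * cs.simple i * u⁻¹ := htu
    have h3 : φ t (t, e) = φ u (φ (cs.simple i) (φ u⁻¹ (t, e))) := by
      conv_lhs => rw [htu]
      rw [map_mul, map_mul, sx_mul, sx_mul, ← htu]
    have key : ∀ w : W, ∀ x, ∃ c, ∀ e, φ w (x, e) = (w * x * w⁻¹, e + c) := by
      intro w x
      obtain ⟨ω', rfl⟩ := cs.wordProd_surjective w
      exact ⟨_, fun e => sx_word cs ω' x e⟩
    obtain ⟨c, hc⟩ := key u⁻¹ t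
    obtain ⟨d, hd⟩ := key u (cs.simple i)
    have h5 : u⁻¹ * t * u⁻¹⁻¹ = cs.simple i := by rw [h2]; group
    rw [hc, h5, hd, ← h2] at h1
    rw [h3, hc, h5, hφ, cs.lift_apply_simple]
    simp only [sxAct, if_true]
    rw [← hφ]
    simp only [CoxeterSystem.simple_mul_simple_self, one_mul]
    rw [hd, ← h2]
    have h6 := congrArg Prod.snd h1
    simp only at h6
    refine Prod.ext rfl ?_
    simp only
    linear_combination h6
  by_contra hnm
  have h0 : φ (cs.wordProd ω) (t, 1) = (cs.wordProd ω * t * (cs.wordProd ω)⁻¹, 1) := by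
    rw [hφ, sx_word, List.count_eq_zero_of_not_mem hnm]; simp
  have h1 : φ (cs.wordProd ω * t) (t, 0) = (cs.wordProd ω * t * (cs.wordProd ω)⁻¹, 1) := by
    rw [map_mul, sx_mul, htt, zero_add, h0]
  obtain ⟨ω', hω', hw'⟩ := cs.exists_isReduced (cs.wordProd ω * t)
  rw [hw', hφ, sx_word] at h1
  have h2 := congrArg Prod.snd h1
  simp only [zero_add] at h2
  have h3 : t ∈ cs.rightInvSeq ω' := by
    by_contra h
    rw [List.count_eq_zero_of_not_mem h] at h2
    simp at h2
  have h4 := (cs.isRightInversion_of_mem_rightInvSeq hω' h3).2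
  rw [← hw', mul_assoc, ht.mul_self, mul_one] at h4
  omega

lemma strong_exchange (cs : CoxeterSystem M W) (ω : List B) (t : W)
    (ht : cs.IsReflection t) (hl : cs.length (cs.wordProd ω * t) < cs.length (cs.wordProd ω)) :
    ∃ j, j < ω.length ∧ cs.wordProd ω * t = cs.wordProd (ω.eraseIdx j) := by
  obtain ⟨j, hj, h⟩ := List.mem_iff_getElem.1 (strong_exchange_mem cs ω t ht hl)
  refine ⟨j, by simpa using hj, ?_⟩
  rw [← cs.wordProd_mul_getD_rightInvSeq, List.getD_eq_getElem _ _ hj, h]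

lemma left_exchange (cs : CoxeterSystem M W) (ω : List B) (i : B)
    (hl : cs.length (cs.simple i * cs.wordProd ω) < cs.length (cs.wordProd ω)) :
    ∃ j, j < ω.length ∧ cs.simple i * cs.wordProd ω = cs.wordProd (ω.eraseIdx j) := by
  have e : cs.wordProd ω * ((cs.wordProd ω)⁻¹ * cs.simple i * cs.wordProd ω)
    = cs.simple i * cs.wordProd ω := by group
  have := strong_exchange cs ω ((cs.wordProd ω)⁻¹ * cs.simple i * cs.wordProd ω)
    ⟨(cs.wordProd ω)⁻¹, i, by simp⟩ (by rwa [e])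
  rwa [e] at this

/-- every word contains a reduced sublist with the same product -/
lemma exists_reduced_sublist (cs : CoxeterSystem M W) (ω : List B) :
    ∃ ω', ω'.Sublist ω ∧ cs.IsReduced ω' ∧ cs.wordProd ω' = cs.wordProd ω := by
  induction ω with
  | nil => exact ⟨[], List.Sublist.refl _, by simp [CoxeterSystem.IsReduced], rfl⟩
  | cons i ω ih =>
    obtain ⟨ω', hs, hr, hp⟩ := ih
    rcases cs.length_simple_mul (cs.wordProd ω') i with h | h
    · refine ⟨i :: ω', hs.cons_cons i, ?_, by simp [cs.wordProd_cons, hp]⟩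
      rw [CoxeterSystem.IsReduced, cs.wordProd_cons, h, hr.eq]; simp
    · obtain ⟨j, hj, he⟩ := left_exchange cs ω' i (by omega)
      refine ⟨ω'.eraseIdx j, ((List.eraseIdx_sublist _ _).trans hs).cons i, ?_, ?_⟩
      · rw [CoxeterSystem.IsReduced, ← he, List.length_eraseIdx_of_lt hj, ← hr.eq]; omega
      · rw [← he, cs.wordProd_cons, hp]

/-- the basic consequence of exchange -/
lemma eq_of_length (cs : CoxeterSystem M W) (x : W) (i j : B)
    (h1 : cs.length x < cs.length (cs.simple i * x))
    (h2 : cs.length x < cs.length (x * cs.simple j))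
    (h3 : cs.length (cs.simple i * x * cs.simple j) < cs.length (x * cs.simple j)) :
    cs.simple i * x = x * cs.simple j := by
  obtain ⟨ω, hr, rfl⟩ := cs.exists_isReduced x
  have e : cs.wordProd (ω ++ [j]) = cs.wordProd ω * cs.simple j := by simp [cs.wordProd_append]
  obtain ⟨k, hk, he⟩ := left_exchange cs (ω ++ [j]) i (by rw [e, ← mul_assoc]; exact h3)
  rw [e, ← mul_assoc] at he
  rcases lt_or_ge k ω.length with h | h
  · rw [List.eraseIdx_append_of_lt_length h, cs.wordProd_append] at he
    simp only [CoxeterSystem.wordProd_singleton, mul_left_inj] at he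
    have := cs.length_wordProd_le (ω.eraseIdx k)
    rw [← he, List.length_eraseIdx_of_lt h, ← hr.eq] at this
    omega
  · have : k = ω.length := by simp at hk; omega
    subst this
    rw [List.eraseIdx_append_of_length_le le_rfl] at he
    simp only [Nat.sub_self, List.eraseIdx_cons_zero, List.append_nil] at he
    nth_rw 2 [← he]; simp

/-! ### Bruhat order -/

/-- one step of the Bruhat graph -/
def bstep (cs : CoxeterSystem M W) (x y : W) : Prop :=
  ∃ t, cs.IsReflection t ∧ y = x * t ∧ cs.length x < cs.length y

/-- chain version of the Bruhat order -/
def bchain (cs : CoxeterSystem M W) : W → W → Prop := Relation.ReflTransGen (bstep cs)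

lemma bstep_simple (cs : CoxeterSystem M W) (x : W) (i : B)
    (h : cs.length x < cs.length (x * cs.simple i)) : bstep cs x (x * cs.simple i) :=
  ⟨_, cs.isReflection_simple i, rfl, h⟩

lemma bchain_word (cs : CoxeterSystem M W) {x y : W} (h : bchain cs x y) :
    ∀ ω, cs.wordProd ω = y → ∃ ω', ω'.Sublist ω ∧ cs.IsReduced ω' ∧ cs.wordProd ω' = x := by
  induction h using Relation.ReflTransGen.head_induction_on with
  | refl => rintro ω rfl; exact exists_reduced_sublist cs ω
  | head hst _ ih =>
    intro ω hω
    obtain ⟨ω', hs, hr, hp⟩ := ih ω hω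
    obtain ⟨t, ht, he, hl⟩ := hst
    rename_i a c _
    have e : cs.wordProd ω' * t = a := by rw [hp, he, mul_assoc, ht.mul_self, mul_one]
    obtain ⟨j, hj, h1⟩ := strong_exchange cs ω' t ht (by rw [e, hp]; exact hl)
    obtain ⟨ω'', hs', hr', hp'⟩ := exists_reduced_sublist cs (ω'.eraseIdx j)
    exact ⟨ω'', hs'.trans ((List.eraseIdx_sublist _ _).trans hs), hr', by rw [hp', ← h1, e]⟩

lemma bstep_lift (cs : CoxeterSystem M W) {x y : W} (h : bstep cs x y) (i : B) :
    x * cs.simple i = y ∨ bstep cs (x * cs.simple i) (y * cs.simple i) := by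
  obtain ⟨t, ht, rfl, hl⟩ := h
  have ht' : cs.IsReflection (cs.simple i * t * cs.simple i) := by
    simpa using ht.conj (cs.simple i)
  have e : x * cs.simple i * (cs.simple i * t * cs.simple i) = x * t * cs.simple i := by
    simp [mul_assoc]
  by_cases hlt : cs.length (x * cs.simple i) < cs.length (x * t * cs.simple i)
  · right
    exact ⟨_, ht', e.symm, hlt⟩
  · left
    have hne := ht'.length_mul_left_ne (x * cs.simple i)
    rw [e] at hne
    have hlt' : cs.length (x * t * cs.simple i) < cs.length (x * cs.simple i) := by omega
    obtain ⟨ω, hr, rfl⟩ := cs.exists_isReduced x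
    have e2 : cs.wordProd (ω ++ [i]) = cs.wordProd ω * cs.simple i := by simp [cs.wordProd_append]
    obtain ⟨k, hk, he⟩ := strong_exchange cs (ω ++ [i]) _ ht' (by rw [e2, e]; exact hlt')
    rw [e2, e] at he
    rcases lt_or_ge k ω.length with h | h
    · rw [List.eraseIdx_append_of_lt_length h, cs.wordProd_append] at he
      simp only [CoxeterSystem.wordProd_singleton, mul_left_inj] at he
      have := cs.length_wordProd_le (ω.eraseIdx k)
      rw [← he, List.length_eraseIdx_of_lt h, ← hr.eq] at this
      omega
    · have : k = ω.length := by simp at hk; omega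
      subst this
      rw [List.eraseIdx_append_of_length_le le_rfl] at he
      simp only [Nat.sub_self, List.eraseIdx_cons_zero, List.append_nil] at he
      nth_rw 1 [← he]; simp

lemma bchain_lift (cs : CoxeterSystem M W) {x y : W} (h : bchain cs x y) (i : B) :
    bchain cs (x * cs.simple i) y ∨ bchain cs (x * cs.simple i) (y * cs.simple i) := by
  induction h using Relation.ReflTransGen.head_induction_on with
  | refl => right; exact Relation.ReflTransGen.refl
  | head hst hc ih =>
    rcases bstep_lift cs hst i with h | h
    · left; rw [h]; exact hc
    · rcases ih with h' | h'
      · left; exact Relation.ReflTransGen.head h h'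
      · right; exact Relation.ReflTransGen.head h h'

lemma bchain_of_sublist (cs : CoxeterSystem M W) (ω : List B) : cs.IsReduced ω →
    ∀ ω', ω'.Sublist ω → bchain cs (cs.wordProd ω') (cs.wordProd ω) := by
  induction ω using List.reverseRecOn with
  | nil => intro _ ω' h; rw [List.sublist_nil.1 h]; exact Relation.ReflTransGen.refl
  | append_singleton ω i ih =>
    intro hr ω' hs
    have hr' : cs.IsReduced ω := by simpa using hr.take ω.length
    have e2 : cs.wordProd (ω ++ [i]) = cs.wordProd ω * cs.simple i := by simp [cs.wordProd_append]
    have hstep : bchain cs (cs.wordProd ω) (cs.wordProd (ω ++ [i])) := by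
      have h1 := hr.eq
      have h2 := hr'.eq
      rw [e2] at h1 ⊢
      simp only [List.length_append, List.length_singleton] at h1
      exact Relation.ReflTransGen.single (bstep_simple cs _ i (by omega))
    obtain ⟨a, b, rfl, ha, hb⟩ := List.sublist_append_iff.1 hs
    have hxa := ih hr' a ha
    rcases List.sublist_singleton.1 hb with rfl | rfl
    · rw [List.append_nil]; exact hxa.trans hstep
    · have e3 : cs.wordProd (a ++ [i]) = cs.wordProd a * cs.simple i := by
        simp [cs.wordProd_append]
      rw [e3]
      rcases bchain_lift cs hxa i with h | h
      · exact h.trans hstep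
      · rwa [e2]

lemma bruhat_iff (cs : CoxeterSystem M W) (x y : W) : bruhatLE cs x y ↔ bchain cs x y := by
  constructor
  · rintro ⟨ω, hr, rfl, ω', hs, hr', rfl⟩
    exact bchain_of_sublist cs ω hr ω' hs
  · intro h
    obtain ⟨ω, hr, he⟩ := cs.exists_isReduced y
    exact ⟨ω, hr, he.symm, bchain_word cs h ω he.symm⟩

lemma bruhat_refl (cs : CoxeterSystem M W) (x : W) : bruhatLE cs x x :=
  (bruhat_iff cs x x).2 Relation.ReflTransGen.refl

lemma bruhat_trans (cs : CoxeterSystem M W) {x y z : W} (h : bruhatLE cs x y)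
    (h' : bruhatLE cs y z) : bruhatLE cs x z := by
  rw [bruhat_iff] at *
  exact h.trans h'

lemma bruhat_length (cs : CoxeterSystem M W) {x y : W} (h : bruhatLE cs x y) :
    cs.length x ≤ cs.length y := by
  obtain ⟨ω, hr, rfl, ω', hs, hr', rfl⟩ := h
  rw [hr.eq, hr'.eq]; exact hs.length_le

lemma bruhat_eq_of_length (cs : CoxeterSystem M W) {x y : W} (h : bruhatLE cs x y)
    (hl : cs.length y ≤ cs.length x) : x = y := by
  obtain ⟨ω, hr, rfl, ω', hs, hr', rfl⟩ := h
  rw [hr.eq, hr'.eq] at hl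
  rw [hs.eq_of_length_le hl]

lemma bruhat_length_lt (cs : CoxeterSystem M W) {x y : W} (h : bruhatLE cs x y)
    (hne : x ≠ y) : cs.length x < cs.length y := by
  by_contra h'
  exact hne (bruhat_eq_of_length cs h (by omega))

lemma bruhat_inv (cs : CoxeterSystem M W) {x y : W} (h : bruhatLE cs x y) :
    bruhatLE cs x⁻¹ y⁻¹ := by
  obtain ⟨ω, hr, rfl, ω', hs, hr', rfl⟩ := h
  exact ⟨ω.reverse, hr.reverse, by simp, ω'.reverse, hs.reverse, hr'.reverse, by simp⟩

lemma bruhat_mul_simple (cs : CoxeterSystem M W) (x : W) (i : B)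
    (h : cs.length x < cs.length (x * cs.simple i)) : bruhatLE cs x (x * cs.simple i) :=
  (bruhat_iff cs _ _).2 (Relation.ReflTransGen.single (bstep_simple cs x i h))

lemma bruhat_mul_simple' (cs : CoxeterSystem M W) (x : W) (i : B)
    (h : cs.length (x * cs.simple i) < cs.length x) : bruhatLE cs (x * cs.simple i) x := by
  have := bruhat_mul_simple cs (x * cs.simple i) i (by simpa using h)
  simpa using this

/-- lifting: `ys < y`, `x ≤ y` imply `xs ≤ y`. -/
lemma bruhat_lift1 (cs : CoxeterSystem M W) {x y : W} (h : bruhatLE cs x y) (i : B)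
    (hy : cs.length (y * cs.simple i) < cs.length y) : bruhatLE cs (x * cs.simple i) y := by
  rcases bchain_lift cs ((bruhat_iff cs _ _).1 h) i with h' | h'
  · exact (bruhat_iff cs _ _).2 h'
  · exact bruhat_trans cs ((bruhat_iff cs _ _).2 h') (bruhat_mul_simple' cs y i hy)

/-- lifting: `xs < x`, `ys < y`, `x ≤ y` imply `xs ≤ ys`; and
`xs > x`, `ys < y`, `x ≤ y` imply `x ≤ ys`. -/
lemma bruhat_lift2 (cs : CoxeterSystem M W) {x y : W} (h : bruhatLE cs x y) (i : B) :
    bruhatLE cs x (y * cs.simple i) ∨ (cs.length (x * cs.simple i) < cs.length x ∧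
      bruhatLE cs (x * cs.simple i) (y * cs.simple i)) := by
  obtain ⟨ω, hr, he⟩ := cs.exists_isReduced (y * cs.simple i)
  have e2 : cs.wordProd (ω ++ [i]) = y := by
    rw [cs.wordProd_append, ← he]; simp
  obtain ⟨ω', hs, hr', hp⟩ := bchain_word cs ((bruhat_iff cs _ _).1 h) _ e2
  obtain ⟨a, b, rfl, ha, hb⟩ := List.sublist_append_iff.1 hs
  rcases List.sublist_singleton.1 hb with rfl | rfl
  · left
    exact ⟨ω, hr, he.symm, a, ha, by simpa using hr', by simpa using hp⟩
  · right
    have hra : cs.IsReduced a := by simpa using hr'.take a.length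
    have e3 : cs.wordProd a = x * cs.simple i := by
      rw [← hp, cs.wordProd_append]; simp
    refine ⟨?_, ω, hr, he.symm, a, ha, hra, e3⟩
    rw [← e3, ← hp, hra.eq, hr'.eq]; simp

lemma bruhat_lift_down (cs : CoxeterSystem M W) {x y : W} (h : bruhatLE cs x y) (i : B)
    (hx : cs.length (x * cs.simple i) < cs.length x) :
    bruhatLE cs (x * cs.simple i) (y * cs.simple i) := by
  rcases bruhat_lift2 cs h i with h' | h'
  · exact bruhat_trans cs (bruhat_mul_simple' cs x i hx) h'
  · exact h'.2

lemma bruhat_lift_up (cs : CoxeterSystem M W) {x y : W} (h : bruhatLE cs x y) (i : B)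
    (hx : cs.length x < cs.length (x * cs.simple i)) :
    bruhatLE cs x (y * cs.simple i) := by
  rcases bruhat_lift2 cs h i with h' | h'
  · exact h'
  · omega

lemma length_inv_left (cs : CoxeterSystem M W) (x : W) (i : B) :
    cs.length (x⁻¹ * cs.simple i) = cs.length (cs.simple i * x) := by
  rw [← cs.length_inv]; simp

lemma bruhat_left_lift1 (cs : CoxeterSystem M W) {x y : W} (h : bruhatLE cs x y) (i : B)
    (hy : cs.length (cs.simple i * y) < cs.length y) : bruhatLE cs (cs.simple i * x) y := by
  have := bruhat_inv cs (bruhat_lift1 cs (bruhat_inv cs h) i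
    (by rw [length_inv_left, cs.length_inv]; exact hy))
  simpa using this

lemma bruhat_left_lift_up (cs : CoxeterSystem M W) {x y : W} (h : bruhatLE cs x y) (i : B)
    (hx : cs.length x < cs.length (cs.simple i * x)) :
    bruhatLE cs x (cs.simple i * y) := by
  have := bruhat_inv cs (bruhat_lift_up cs (bruhat_inv cs h) i
    (by rw [length_inv_left, cs.length_inv]; exact hx))
  simpa using this

lemma bruhat_simple_mul (cs : CoxeterSystem M W) (x : W) (i : B)
    (h : cs.length x < cs.length (cs.simple i * x)) : bruhatLE cs x (cs.simple i * x) := by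
  have := bruhat_inv cs (bruhat_mul_simple cs x⁻¹ i
    (by rw [length_inv_left, cs.length_inv]; exact h))
  simpa using this

/-! ### Parabolic subgroups -/

lemma closure_word (cs : CoxeterSystem M W) (J : Set B) {a : W}
    (ha : a ∈ Subgroup.closure (cs.simple '' J)) :
    ∃ ω : List B, (∀ i ∈ ω, i ∈ J) ∧ cs.IsReduced ω ∧ cs.wordProd ω = a := by
  have h : ∃ ω : List B, (∀ i ∈ ω, i ∈ J) ∧ cs.wordProd ω = a := by
    induction ha using Subgroup.closure_induction with
    | mem x hx =>
      obtain ⟨i, hi, rfl⟩ := hx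
      exact ⟨[i], by simpa using hi, by simp⟩
    | one => exact ⟨[], by simp, by simp⟩
    | mul x y _ _ hx hy =>
      obtain ⟨a, ha, rfl⟩ := hx
      obtain ⟨b, hb, rfl⟩ := hy
      refine ⟨a ++ b, ?_, by rw [cs.wordProd_append]⟩
      intro i hi
      rcases List.mem_append.1 hi with h | h
      · exact ha i h
      · exact hb i h
    | inv x _ hx =>
      obtain ⟨a, ha, rfl⟩ := hx
      exact ⟨a.reverse, by simpa using ha, by simp⟩
  obtain ⟨ω, hJ, rfl⟩ := h
  obtain ⟨ω', hs, hr, hp⟩ := exists_reduced_sublist cs ω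
  exact ⟨ω', fun i hi => hJ i (hs.subset hi), hr, hp⟩

lemma word_mem_closure (cs : CoxeterSystem M W) (J : Set B) (ω : List B) (h : ∀ i ∈ ω, i ∈ J) :
    cs.wordProd ω ∈ Subgroup.closure (cs.simple '' J) := by
  induction ω with
  | nil => simp
  | cons i ω ih =>
    rw [cs.wordProd_cons]
    exact Subgroup.mul_mem _ (Subgroup.subset_closure ⟨i, h i (by simp), rfl⟩)
      (ih fun k hk => h k (by simp [hk]))

lemma reduced_tail (cs : CoxeterSystem M W) {i : B} {ω : List B} (h : cs.IsReduced (i :: ω)) :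
    cs.IsReduced ω := by simpa using h.drop 1

lemma reduced_not_erase (cs : CoxeterSystem M W) {i : B} {ω : List B}
    (h : cs.IsReduced (i :: ω)) {k : ℕ} (hk : k < ω.length)
    (he : cs.simple i * cs.wordProd ω = cs.wordProd (ω.eraseIdx k)) : False := by
  have h1 := cs.length_wordProd_le (ω.eraseIdx k)
  rw [← he, ← cs.wordProd_cons, h.eq, List.length_eraseIdx_of_lt hk] at h1
  simp at h1
  omega

lemma par_min_add (cs : CoxeterSystem M W) (J : Set B) (z : W)
    (hz : ∀ b ∈ Subgroup.closure (cs.simple '' J), cs.length z ≤ cs.length (b * z))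
    (ω : List B) (hJ : ∀ i ∈ ω, i ∈ J) (hr : cs.IsReduced ω) :
    cs.length (cs.wordProd ω * z) = ω.length + cs.length z := by
  induction ω with
  | nil => simp
  | cons i ω ih =>
    have hJ' : ∀ k ∈ ω, k ∈ J := fun k hk => hJ k (by simp [hk])
    have ih' := ih hJ' (reduced_tail cs hr)
    rw [cs.wordProd_cons, mul_assoc, List.length_cons]
    rcases cs.length_simple_mul (cs.wordProd ω * z) i with h | h
    · omega
    · exfalso
      obtain ⟨ωz, hrz, hpz⟩ := cs.exists_isReduced z
      have e : cs.wordProd (ω ++ ωz) = cs.wordProd ω * z := by rw [cs.wordProd_append, hpz]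
      obtain ⟨k, hk, he⟩ := left_exchange cs (ω ++ ωz) i (by rw [e]; omega)
      rw [e] at he
      rcases lt_or_ge k ω.length with h' | h'
      · rw [List.eraseIdx_append_of_lt_length h', cs.wordProd_append, ← hpz, ← mul_assoc] at he
        exact reduced_not_erase cs hr h' (mul_right_cancel he)
      · rw [List.eraseIdx_append_of_length_le h', cs.wordProd_append] at he
        have hk' : k - ω.length < ωz.length := by
          rw [List.length_append] at hk; omega
        have h1 := cs.length_wordProd_le (ωz.eraseIdx (k - ω.length))
        have h2 : cs.wordProd (ωz.eraseIdx (k - ω.length)) =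
            ((cs.wordProd ω)⁻¹ * cs.simple i * cs.wordProd ω) * z := by
          rw [mul_assoc, mul_assoc, he]; group
        have h3 := word_mem_closure cs J ω hJ'
        have h4 := hz ((cs.wordProd ω)⁻¹ * cs.simple i * cs.wordProd ω)
          (Subgroup.mul_mem _ (Subgroup.mul_mem _ (Subgroup.inv_mem _ h3)
            (Subgroup.subset_closure ⟨i, hJ i (by simp), rfl⟩)) h3)
        rw [← h2] at h4
        rw [List.length_eraseIdx_of_lt hk', ← hrz.eq, ← hpz] at h1
        have h5 : 0 < cs.length z := by rw [hpz, hrz.eq]; omega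
        omega

lemma exists_min (cs : CoxeterSystem M W) (J : Set B) (x : W) :
    ∃ a ∈ Subgroup.closure (cs.simple '' J), ∃ z, x = a * z ∧
      ∀ b ∈ Subgroup.closure (cs.simple '' J), cs.length z ≤ cs.length (b * z) := by
  have hex : ∃ n, ∃ b ∈ Subgroup.closure (cs.simple '' J), cs.length (b * x) = n :=
    ⟨_, 1, Subgroup.one_mem _, rfl⟩
  obtain ⟨b, hb, hn⟩ := Nat.find_spec hex
  refine ⟨b⁻¹, Subgroup.inv_mem _ hb, b * x, by group, ?_⟩
  intro c hc
  rw [hn]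
  apply Nat.find_min' hex
  exact ⟨c * b, Subgroup.mul_mem _ hc hb, by rw [mul_assoc]⟩

lemma reps_min (cs : CoxeterSystem M W) (J : Set B) {z : W} (hz : z ∈ cosetReps cs J) :
    ∀ b ∈ Subgroup.closure (cs.simple '' J), cs.length z ≤ cs.length (b * z) := by
  obtain ⟨a, ha, z0, he, h0⟩ := exists_min cs J z
  obtain ⟨ω, hJ, hr, rfl⟩ := closure_word cs J ha
  cases ω with
  | nil => simp at he; rwa [he]
  | cons i ω =>
    exfalso
    have h1 := hz i (hJ i (by simp))
    have h2 := par_min_add cs J z0 h0 _ hJ hr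
    have h3 := par_min_add cs J z0 h0 ω (fun k hk => hJ k (by simp [hk])) (reduced_tail cs hr)
    have h4 : cs.simple i * z = cs.wordProd ω * z0 := by
      rw [he, cs.wordProd_cons]; simp [mul_assoc]
    rw [h4, h3, he, h2, List.length_cons] at h1
    omega

lemma exists_decomp (cs : CoxeterSystem M W) (J : Set B) (x : W) :
    ∃ a ∈ Subgroup.closure (cs.simple '' J), ∃ z ∈ cosetReps cs J, x = a * z := by
  obtain ⟨a, ha, z, he, h0⟩ := exists_min cs J x
  refine ⟨a, ha, z, ?_, he⟩
  intro i hi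
  have h1 := h0 _ (Subgroup.subset_closure ⟨i, hi, rfl⟩)
  have h2 := cs.length_simple_mul_ne z i
  omega

lemma length_add (cs : CoxeterSystem M W) (J : Set B) {a z : W}
    (ha : a ∈ Subgroup.closure (cs.simple '' J)) (hz : z ∈ cosetReps cs J) :
    cs.length (a * z) = cs.length a + cs.length z := by
  obtain ⟨ω, hJ, hr, rfl⟩ := closure_word cs J ha
  rw [par_min_add cs J z (reps_min cs J hz) ω hJ hr, hr.eq]

lemma decomp_unique (cs : CoxeterSystem M W) (J : Set B) {a z a' z' : W}
    (ha : a ∈ Subgroup.closure (cs.simple '' J)) (hz : z ∈ cosetReps cs J)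
    (ha' : a' ∈ Subgroup.closure (cs.simple '' J)) (hz' : z' ∈ cosetReps cs J)
    (h : a * z = a' * z') : a = a' ∧ z = z' := by
  have h1 := length_add cs J (Subgroup.mul_mem _ (Subgroup.inv_mem _ ha) ha') hz'
  have h2 := length_add cs J (Subgroup.mul_mem _ (Subgroup.inv_mem _ ha') ha) hz
  rw [mul_assoc, ← h, inv_mul_cancel_left] at h1
  rw [mul_assoc, h, inv_mul_cancel_left] at h2
  have h3 : cs.length (a⁻¹ * a') = 0 := by omega
  rw [cs.length_eq_zero_iff, inv_mul_eq_one] at h3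
  subst h3
  exact ⟨rfl, mul_left_cancel h⟩

lemma reps_mul_simple (cs : CoxeterSystem M W) (J : Set B) {z : W} (hz : z ∈ cosetReps cs J)
    (i : B) (h : cs.length (z * cs.simple i) < cs.length z) :
    z * cs.simple i ∈ cosetReps cs J := by
  intro k hk
  have h1 := hz k hk
  have h2 := cs.length_simple_mul (z * cs.simple i) k
  have h3 := cs.length_mul_simple (cs.simple k * z) i
  have h4 := cs.length_mul_simple z i
  rw [← mul_assoc] at h2 ⊢
  omega

lemma deodhar (cs : CoxeterSystem M W) (J : Set B) {u : W} (hu : u ∈ cosetReps cs J)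
    (i : B) (h : cs.length u < cs.length (u * cs.simple i))
    (hn : u * cs.simple i ∉ cosetReps cs J) : ∃ k ∈ J, cs.simple k * u = u * cs.simple i := by
  simp only [cosetReps, Set.mem_ofPred_eq, not_forall] at hn
  obtain ⟨k, hk, hl⟩ := hn
  refine ⟨k, hk, eq_of_length cs u k i (hu k hk) h ?_⟩
  have h2 := cs.length_simple_mul_ne (u * cs.simple i) k
  rw [← mul_assoc] at h2 hl
  omega

lemma bruhat_of_le_mul (cs : CoxeterSystem M W) (J : Set B) {u v a : W}
    (hu : u ∈ cosetReps cs J) (ha : a ∈ Subgroup.closure (cs.simple '' J))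
    (h : bruhatLE cs u (a * v)) : bruhatLE cs u v := by
  obtain ⟨ω, hJ, -, rfl⟩ := closure_word cs J ha
  induction ω with
  | nil => simpa using h
  | cons i ω ih =>
    have hJ' : ∀ k ∈ ω, k ∈ J := fun k hk => hJ k (by simp [hk])
    apply ih hJ' (word_mem_closure cs J ω hJ')
    have := bruhat_left_lift_up cs h i (hu i (hJ i (by simp)))
    rwa [cs.wordProd_cons, mul_assoc, cs.simple_mul_simple_cancel_left] at this

lemma le_mul_of_rep (cs : CoxeterSystem M W) (J : Set B) {u a : W}
    (hu : u ∈ cosetReps cs J) (ha : a ∈ Subgroup.closure (cs.simple '' J)) :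
    bruhatLE cs u (a * u) := by
  obtain ⟨ωa, hra, hpa⟩ := cs.exists_isReduced a
  obtain ⟨ωu, hru, hpu⟩ := cs.exists_isReduced u
  refine ⟨ωa ++ ωu, ?_, by rw [cs.wordProd_append, hpa, hpu], ωu,
    List.sublist_append_right _ _, hru, hpu.symm⟩
  rw [CoxeterSystem.IsReduced, cs.wordProd_append, ← hpa, ← hpu, length_add cs J ha hu, hpa, hpu,
    hra.eq, hru.eq, List.length_append]

lemma mul_le_mul_rep (cs : CoxeterSystem M W) (J : Set B) {u v a : W}
    (hu : u ∈ cosetReps cs J) (hv : v ∈ cosetReps cs J)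
    (ha : a ∈ Subgroup.closure (cs.simple '' J)) (h : bruhatLE cs u v) :
    bruhatLE cs (a * u) (a * v) := by
  obtain ⟨ωa, hra, hpa⟩ := cs.exists_isReduced a
  obtain ⟨ωv, hrv, hpv, ωu, hs, hru, hpu⟩ := h
  refine ⟨ωa ++ ωv, ?_, by rw [cs.wordProd_append, hpa, hpv], ωa ++ ωu,
    (List.Sublist.refl _).append hs, ?_, by rw [cs.wordProd_append, hpa, hpu]⟩
  · rw [CoxeterSystem.IsReduced, cs.wordProd_append, ← hpa, hpv, length_add cs J ha hv, hpa, ← hpv,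
      hra.eq, hrv.eq, List.length_append]
  · rw [CoxeterSystem.IsReduced, cs.wordProd_append, ← hpa, hpu, length_add cs J ha hu, hpa, ← hpu,
      hra.eq, hru.eq, List.length_append]

lemma le_of_mul_le (cs : CoxeterSystem M W) (J : Set B) {u v a b : W}
    (hu : u ∈ cosetReps cs J)
    (ha : a ∈ Subgroup.closure (cs.simple '' J)) (hb : b ∈ Subgroup.closure (cs.simple '' J))
    (h : bruhatLE cs (a * u) (b * v)) : bruhatLE cs u v :=
  bruhat_of_le_mul cs J hu hb (bruhat_trans cs (le_mul_of_rep cs J hu ha) h)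

lemma wJ_left (cs : CoxeterSystem M W) (J : Set B) (wJ : W)
    (hwJmem : wJ ∈ Subgroup.closure (cs.simple '' J))
    (hwJlong : ∀ u ∈ Subgroup.closure (cs.simple '' J), cs.length u ≤ cs.length wJ)
    {i : B} (hi : i ∈ J) : cs.length (cs.simple i * wJ) < cs.length wJ := by
  have h1 := hwJlong _ (Subgroup.mul_mem _ (Subgroup.subset_closure ⟨i, hi, rfl⟩) hwJmem)
  have := cs.length_simple_mul_ne wJ i
  omega

lemma wJ_len (cs : CoxeterSystem M W) (J : Set B) (wJ : W)
    (hwJmem : wJ ∈ Subgroup.closure (cs.simple '' J))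
    (hwJlong : ∀ u ∈ Subgroup.closure (cs.simple '' J), cs.length u ≤ cs.length wJ)
    {a : W} (ha : a ∈ Subgroup.closure (cs.simple '' J)) :
    cs.length a + cs.length (a⁻¹ * wJ) = cs.length wJ := by
  obtain ⟨ω, hJ, hr, rfl⟩ := closure_word cs J ha
  rw [hr.eq]
  clear ha
  induction ω with
  | nil => simp
  | cons i ω ih =>
    have hJ' : ∀ k ∈ ω, k ∈ J := fun k hk => hJ k (by simp [hk])
    have ih' := ih hJ' (reduced_tail cs hr)
    obtain ⟨ωb, hrb, hpb⟩ := cs.exists_isReduced ((cs.wordProd ω)⁻¹ * wJ)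
    have e : cs.wordProd (ω ++ ωb) = wJ := by rw [cs.wordProd_append, ← hpb]; group
    obtain ⟨k, hk, he⟩ := left_exchange cs (ω ++ ωb) i
      (by rw [e]; exact wJ_left cs J wJ hwJmem hwJlong (hJ i (by simp)))
    rw [cs.wordProd_append, ← mul_assoc] at he
    rcases lt_or_ge k ω.length with h' | h'
    · rw [List.eraseIdx_append_of_lt_length h', cs.wordProd_append] at he
      exact (reduced_not_erase cs hr h' (mul_right_cancel he)).elim
    · rw [List.eraseIdx_append_of_length_le h', cs.wordProd_append, mul_assoc,
        ← cs.wordProd_append, e] at he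
      have hk' : k - ω.length < ωb.length := by
        rw [List.length_append] at hk; omega
      have h1 := cs.length_wordProd_le (ωb.eraseIdx (k - ω.length))
      have h2 : (cs.wordProd (i :: ω))⁻¹ * wJ = cs.wordProd (ωb.eraseIdx (k - ω.length)) := by
        rw [cs.wordProd_cons, mul_inv_rev, cs.inv_simple, mul_assoc, he]; group
      rw [← h2, List.length_eraseIdx_of_lt hk', ← hrb.eq, ← hpb] at h1
      have h3 := cs.length_mul_le (cs.wordProd (i :: ω)) ((cs.wordProd (i :: ω))⁻¹ * wJ)
      rw [mul_inv_cancel_left, hr.eq] at h3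
      have h5 : 0 < cs.length ((cs.wordProd ω)⁻¹ * wJ) := by rw [hpb, hrb.eq]; omega
      rw [List.length_cons] at h3 ⊢
      omega

lemma wJ_sq (cs : CoxeterSystem M W) (J : Set B) (wJ : W)
    (hwJmem : wJ ∈ Subgroup.closure (cs.simple '' J))
    (hwJlong : ∀ u ∈ Subgroup.closure (cs.simple '' J), cs.length u ≤ cs.length wJ)
    : wJ * wJ = 1 := by
  have h := wJ_len cs J wJ hwJmem hwJlong (Subgroup.inv_mem _ hwJmem)
  rw [cs.length_inv, inv_inv] at h
  exact cs.length_eq_zero_iff.1 (by omega)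

lemma wJ_conj (cs : CoxeterSystem M W) (J : Set B) (wJ : W)
    (hwJmem : wJ ∈ Subgroup.closure (cs.simple '' J))
    (hwJlong : ∀ u ∈ Subgroup.closure (cs.simple '' J), cs.length u ≤ cs.length wJ)
    {i : B} (hi : i ∈ J) : ∃ k ∈ J, wJ * cs.simple i = cs.simple k * wJ := by
  have hmem : wJ * cs.simple i ∈ Subgroup.closure (cs.simple '' J) :=
    Subgroup.mul_mem _ hwJmem (Subgroup.subset_closure ⟨i, hi, rfl⟩)
  have h1 := hwJlong _ hmem
  have h2 := cs.length_mul_simple wJ i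
  have h3 := wJ_len cs J wJ hwJmem hwJlong (Subgroup.inv_mem _ hmem)
  rw [cs.length_inv, inv_inv] at h3
  obtain ⟨ω, hJ, hr, hp⟩ := closure_word cs J (Subgroup.mul_mem _ hmem hwJmem)
  have h4 : ω.length = 1 := by rw [← hr.eq, hp]; omega
  obtain ⟨k, rfl⟩ := List.length_eq_one_iff.1 h4
  refine ⟨k, hJ k (by simp), ?_⟩
  rw [cs.wordProd_singleton] at hp
  rw [hp, mul_assoc, wJ_sq cs J wJ hwJmem hwJlong, mul_one]


/-! ### `R`-polynomials -/

open Polynomial in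
lemma invPoly_eq (N : ℕ) (P : ℤ[X]) (h : P.natDegree ≤ N) : invPoly N P = P.reflect N := by
  ext k
  rw [invPoly, coeff_X_pow_mul', coeff_reverse, coeff_reflect]
  have rv : ∀ N i, revAt N i = if i ≤ N then N - i else i := fun _ _ => rfl
  simp only [rv]
  have h0 : ∀ m, P.natDegree < m → P.coeff m = 0 := fun m hm =>
    coeff_eq_zero_of_natDegree_lt hm
  by_cases h1 : N - P.natDegree ≤ k
  · rw [if_pos h1]
    by_cases h2 : k ≤ N
    · rw [if_pos h2, if_pos (by omega)]
      congr 1; omega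
    · rw [if_neg h2, if_neg (by omega), h0 _ (by omega), h0 _ (by omega)]
  · rw [if_neg h1, if_pos (by omega), h0 _ (by omega)]

open Polynomial in
lemma eq_zero_of_reflect (N : ℕ) (D : ℤ[X]) (h : 2 * D.natDegree < N)
    (hD : D.reflect N = D) : D = 0 := by
  ext k
  rw [coeff_zero]
  by_cases hk : k ≤ D.natDegree
  · rw [← hD, coeff_reflect, revAt_le (by omega)]
    exact coeff_eq_zero_of_natDegree_lt (by omega)
  · exact coeff_eq_zero_of_natDegree_lt (by omega)

lemma mem_reps_empty (cs : CoxeterSystem M W) (x : W) : x ∈ cosetReps cs (∅ : Set B) := by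
  simp [cosetReps]

section okl

open Polynomial

variable [Fintype W] {cs : CoxeterSystem M W} {y₀ : ℤ[X]}

lemma okl_R_down (okl : ParabolicKL cs (∅ : Set B) y₀) (x w : W) (i : B)
    (hw : cs.length (w * cs.simple i) < cs.length w)
    (hx : cs.length (x * cs.simple i) < cs.length x) :
    okl.R x w = okl.R (x * cs.simple i) (w * cs.simple i) := by
  have m := mem_reps_empty cs
  by_cases hxw : x = w
  · rw [hxw, okl.R_refl _ (m _), okl.R_refl _ (m _)]
  by_cases hle : bruhatLE cs x w
  · exact (okl.R_rec x (m _) w (m _) hle hxw i hw).1 hx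
  · rw [okl.R_eq_zero _ (m _) _ (m _) hle, okl.R_eq_zero _ (m _) _ (m _)]
    intro h
    apply hle
    have := bruhat_lift1 cs (bruhat_trans cs h (bruhat_mul_simple' cs w i hw)) i hw
    simpa using this

lemma okl_R_up (okl : ParabolicKL cs (∅ : Set B) y₀) (x w : W) (i : B)
    (hw : cs.length (w * cs.simple i) < cs.length w)
    (hx : cs.length x < cs.length (x * cs.simple i)) :
    okl.R x w = (X - 1) * okl.R x (w * cs.simple i)
      + X * okl.R (x * cs.simple i) (w * cs.simple i) := by
  have m := mem_reps_empty cs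
  have hxw : x ≠ w := by rintro rfl; omega
  by_cases hle : bruhatLE cs x w
  · exact (okl.R_rec x (m _) w (m _) hle hxw i hw).2.1 hx (m _)
  · have h1 : ¬ bruhatLE cs x (w * cs.simple i) := fun h =>
      hle (bruhat_trans cs h (bruhat_mul_simple' cs w i hw))
    have h2 : ¬ bruhatLE cs (x * cs.simple i) (w * cs.simple i) := fun h =>
      h1 (bruhat_trans cs (bruhat_mul_simple cs x i hx) h)
    rw [okl.R_eq_zero _ (m _) _ (m _) hle, okl.R_eq_zero _ (m _) _ (m _) h1,
      okl.R_eq_zero _ (m _) _ (m _) h2]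
    simp

/-- right Hecke operator -/
noncomputable def opR (cs : CoxeterSystem M W) (i : B) (f : W → ℤ[X]) (x : W) : ℤ[X] :=
  if cs.length (x * cs.simple i) < cs.length x then f (x * cs.simple i)
  else (X - 1) * f x + X * f (x * cs.simple i)

/-- left Hecke operator -/
noncomputable def opL (cs : CoxeterSystem M W) (i : B) (f : W → ℤ[X]) (x : W) : ℤ[X] :=
  if cs.length (cs.simple i * x) < cs.length x then f (cs.simple i * x)
  else (X - 1) * f x + X * f (cs.simple i * x)

lemma op_comm (cs : CoxeterSystem M W) (i j : B) (f : W → ℤ[X]) :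
    opR cs j (opL cs i f) = opL cs i (opR cs j f) := by
  funext x
  have key : cs.simple i * x = x * cs.simple j ∨
      ((cs.length (cs.simple i * x) < cs.length x ↔
        cs.length (cs.simple i * (x * cs.simple j)) < cs.length (x * cs.simple j)) ∧
       (cs.length (x * cs.simple j) < cs.length x ↔
        cs.length (cs.simple i * x * cs.simple j) < cs.length (cs.simple i * x))) := by
    have a1 := cs.length_simple_mul x i
    have a2 := cs.length_mul_simple x j
    have a3 := cs.length_simple_mul (x * cs.simple j) i
    have a4 := cs.length_mul_simple (cs.simple i * x) j
    rw [← mul_assoc] at a3 ⊢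
    by_contra hcon
    rw [not_or] at hcon
    obtain ⟨hne, hcon⟩ := hcon
    rcases a1 with a1 | a1 <;> rcases a2 with a2 | a2
    · have : ¬ cs.length (cs.simple i * x * cs.simple j) < cs.length (x * cs.simple j) :=
        fun h => hne (eq_of_length cs x i j (by omega) (by omega) h)
      apply hcon
      omega
    · apply hcon; omega
    · apply hcon; omega
    · have h := eq_of_length cs (x * cs.simple j) i j
      rw [← mul_assoc, cs.simple_mul_simple_cancel_right, cs.simple_mul_simple_cancel_right] at h
      have : ¬ (cs.length (x * cs.simple j) < cs.length (cs.simple i * x * cs.simple j)) := by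
        intro h'
        have h2 := h h' (by omega) (by omega)
        apply hne
        nth_rw 2 [← h2]
        simp
      apply hcon
      omega
  rcases key with h | ⟨h1, h2⟩
  · have e : cs.simple i * (x * cs.simple j) = x := by rw [← h]; simp
    have e' : x * cs.simple j * cs.simple j = x := by simp
    simp only [opR, opL, h, e, e']
  · rw [← mul_assoc] at h1
    simp only [opR, opL, ← mul_assoc, ← h1, ← h2]
    split_ifs <;> ring

lemma okl_R_col (okl : ParabolicKL cs (∅ : Set B) y₀) (w : W) (i : B)
    (hw : cs.length w < cs.length (w * cs.simple i)) :
    (fun x => okl.R x (w * cs.simple i)) = opR cs i (fun x => okl.R x w) := by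
  funext x
  have h := cs.length_mul_simple_ne x i
  have hw' : cs.length (w * cs.simple i * cs.simple i) < cs.length (w * cs.simple i) := by
    simpa using hw
  simp only [opR]
  split_ifs with h1
  · rw [okl_R_down okl x _ i hw' h1]; simp
  · rw [okl_R_up okl x _ i hw' (by omega)]; simp

lemma okl_R_left (okl : ParabolicKL cs (∅ : Set B) y₀) (i : B) : ∀ (n : ℕ) (w : W),
    cs.length w = n → cs.length w < cs.length (cs.simple i * w) →
    (fun x => okl.R x (cs.simple i * w)) = opL cs i (fun x => okl.R x w) := by
  have m := mem_reps_empty cs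
  intro n
  induction n with
  | zero =>
    intro w hw hl
    obtain rfl := cs.length_eq_zero_iff.1 hw
    have h1 := okl_R_col okl 1 i (by simp)
    rw [one_mul] at h1
    rw [mul_one, h1]
    have h2 : ∀ x, x ≠ 1 → okl.R x 1 = 0 := by
      intro x hx
      apply okl.R_eq_zero _ (m _) _ (m _)
      intro h
      apply hx
      exact bruhat_eq_of_length cs h (by simp)
    funext x
    simp only [opR, opL]
    by_cases hx1 : x = 1
    · subst hx1; simp
    by_cases hxs : x = cs.simple i
    · subst hxs; simp
    have h3 : x * cs.simple i ≠ 1 := by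
      intro h; apply hxs
      rw [mul_eq_one_iff_eq_inv] at h; simpa using h
    have h4 : cs.simple i * x ≠ 1 := by
      intro h; apply hxs
      rw [mul_eq_one_iff_inv_eq] at h; simpa using h.symm
    rw [h2 _ hx1, h2 _ h3, h2 _ h4]; simp
  | succ n ih =>
    intro w hw hl
    have hw1 : w ≠ 1 := by rintro rfl; simp at hw
    obtain ⟨j, hj⟩ := cs.exists_rightDescent_of_ne_one hw1
    rw [cs.isRightDescent_iff] at hj
    obtain ⟨w', rfl⟩ : ∃ w', w = w' * cs.simple j := ⟨w * cs.simple j, by simp⟩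
    rw [cs.simple_mul_simple_cancel_right] at hj
    have a1 := cs.length_simple_mul w' i
    have a2 := cs.length_mul_simple (cs.simple i * w') j
    rw [← mul_assoc] at hl ⊢
    rw [okl_R_col okl (cs.simple i * w') j (by omega), ih w' (by omega) (by omega),
      okl_R_col okl w' j (by omega), op_comm]

/-- The antisymmetry used several times. -/
lemma okl_antisymm (okl : ParabolicKL cs (∅ : Set B) y₀) (i : B) (x : W)
    (hx : cs.length x < cs.length (cs.simple i * x)) (z : W) :
    okl.R x (cs.simple i * z) - X * okl.R (cs.simple i * x) (cs.simple i * z)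
      = -(okl.R x z - X * okl.R (cs.simple i * x) z) := by
  have key : ∀ z, cs.length z < cs.length (cs.simple i * z) →
      okl.R x (cs.simple i * z) - X * okl.R (cs.simple i * x) (cs.simple i * z)
      = -(okl.R x z - X * okl.R (cs.simple i * x) z) := by
    intro z hz
    have h1 := congrFun (okl_R_left okl i _ z rfl hz) x
    have h2 := congrFun (okl_R_left okl i _ z rfl hz) (cs.simple i * x)
    simp only [opL] at h1 h2
    rw [if_neg (by omega)] at h1
    rw [cs.simple_mul_simple_cancel_left, if_pos hx] at h2
    rw [h1, h2]; ring
  rcases lt_or_ge (cs.length z) (cs.length (cs.simple i * z)) with h | h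
  · exact key z h
  · have hne := cs.length_simple_mul_ne z i
    have := key (cs.simple i * z) (by rw [cs.simple_mul_simple_cancel_left]; omega)
    rw [cs.simple_mul_simple_cancel_left] at this
    rw [this, neg_neg]

lemma okl_R_monic (okl : ParabolicKL cs (∅ : Set B) y₀) : ∀ (n : ℕ) (w x : W),
    cs.length w = n → bruhatLE cs x w →
    (okl.R x w).natDegree ≤ cs.length w - cs.length x ∧
      (okl.R x w).coeff (cs.length w - cs.length x) = 1 := by
  have m := mem_reps_empty cs
  intro n
  induction n with
  | zero =>
    intro w x hw hle
    have := bruhat_eq_of_length cs hle (by omega)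
    subst this
    rw [okl.R_refl _ (m _)]; simp
  | succ n ih =>
    intro w x hw hle
    have hw1 : w ≠ 1 := by rintro rfl; simp at hw
    obtain ⟨j, hj⟩ := cs.exists_rightDescent_of_ne_one hw1
    have hj' : cs.length (w * cs.simple j) < cs.length w := hj
    rw [cs.isRightDescent_iff] at hj
    have hlen := bruhat_length cs hle
    rcases cs.length_mul_simple x j with h | h
    · rw [okl_R_up okl x w j hj' (by omega)]
      have hle' := bruhat_lift_up cs hle j (by omega)
      obtain ⟨d1, c1⟩ := ih (w * cs.simple j) x (by omega) hle'
      have hlen' := bruhat_length cs hle'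
      have d2 : (okl.R (x * cs.simple j) (w * cs.simple j)).natDegree + 2
          ≤ cs.length w - cs.length x ∨ okl.R (x * cs.simple j) (w * cs.simple j) = 0 := by
        by_cases h' : bruhatLE cs (x * cs.simple j) (w * cs.simple j)
        · left
          have := (ih _ _ (by omega) h').1
          have := bruhat_length cs h'
          omega
        · right; exact okl.R_eq_zero _ (m _) _ (m _) h'
      obtain ⟨N, hN⟩ : ∃ N, cs.length w - cs.length x = N + 1 := ⟨cs.length w - cs.length x - 1, by omega⟩
      have hN' : cs.length (w * cs.simple j) - cs.length x = N := by omega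
      rw [hN'] at d1 c1
      rw [hN] at d2 ⊢
      set r1 := okl.R x (w * cs.simple j)
      set r2 := okl.R (x * cs.simple j) (w * cs.simple j)
      have hc2 : r2.coeff N = 0 := by
        rcases d2 with h | h
        · exact coeff_eq_zero_of_natDegree_lt (by omega)
        · rw [h]; simp
      have hd2 : r2.natDegree ≤ N := by
        rcases d2 with h | h
        · omega
        · rw [h]; simp
      constructor
      · refine (natDegree_add_le _ _).trans (max_le ?_ ?_)
        · refine natDegree_mul_le.trans ?_
          have : (X - 1 : ℤ[X]).natDegree ≤ 1 := by
            refine (natDegree_sub_le _ _).trans ?_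
            simp
          omega
        · refine natDegree_mul_le.trans ?_
          simp only [natDegree_X]; omega
      · rw [coeff_add, sub_mul, one_mul, coeff_sub, coeff_X_mul, coeff_X_mul, hc2, c1,
          coeff_eq_zero_of_natDegree_lt (by omega)]
        simp
    · rw [okl_R_down okl x w j hj' (by omega)]
      have hle' := bruhat_lift_down cs hle j (by omega)
      have := ih (w * cs.simple j) (x * cs.simple j) (by omega) hle'
      rwa [show cs.length (w * cs.simple j) - cs.length (x * cs.simple j)
        = cs.length w - cs.length x by omega] at this

/-! ### `P`-polynomials -/

lemma kl_degree {J : Set B} {y : ℤ[X]} (kl : ParabolicKL cs J y) {u v : W}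
    (hu : u ∈ cosetReps cs J) (hv : v ∈ cosetReps cs J) (h : bruhatLE cs u v) :
    2 * (kl.P u v).natDegree ≤ cs.length v - cs.length u := by
  by_cases huv : u = v
  · subst huv; rw [kl.P_refl _ hu]; simp
  · have := kl.P_degree u hu v hv h huv; omega

lemma kl_inversion {J : Set B} {y : ℤ[X]} (kl : ParabolicKL cs J y) {u v : W}
    (hu : u ∈ cosetReps cs J) (hv : v ∈ cosetReps cs J) (h : bruhatLE cs u v) :
    (kl.P u v).reflect (cs.length v - cs.length u)
      = ∑ z ∈ Finset.univ.filter (fun z => z ∈ cosetReps cs J), kl.R u z * kl.P z v := by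
  have hd := kl_degree kl hu hv h
  rw [← invPoly_eq _ _ (by omega), kl.P_inversion u hu v hv h]
  apply Finset.sum_subset
  · intro z; simp only [Finset.mem_filter]; tauto
  · intro z hz hz'
    simp only [Finset.mem_filter, Finset.mem_univ, true_and] at hz hz'
    by_cases h1 : bruhatLE cs u z
    · rw [kl.P_eq_zero z hz v hv (by tauto), mul_zero]
    · rw [kl.R_eq_zero u hu z hz h1, zero_mul]

lemma okl_inversion (okl : ParabolicKL cs (∅ : Set B) y₀) {u v : W} (h : bruhatLE cs u v) :
    (okl.P u v).reflect (cs.length v - cs.length u) = ∑ z : W, okl.R u z * okl.P z v := by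
  rw [kl_inversion okl (mem_reps_empty cs _) (mem_reps_empty cs _) h]
  congr 1
  ext z; simp [mem_reps_empty]

lemma okl_const (okl : ParabolicKL cs (∅ : Set B) y₀) {x w : W} (h : bruhatLE cs x w) :
    (okl.P x w).coeff 0 = 1 := by
  have m := mem_reps_empty cs
  have h1 := congrArg (fun p => p.coeff (cs.length w - cs.length x)) (okl_inversion okl h)
  simp only [coeff_reflect, finsetSum_coeff] at h1
  rw [revAt_le le_rfl, Nat.sub_self] at h1
  rw [h1, Finset.sum_eq_single w]
  · rw [okl.P_refl _ (m _), mul_one]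
    exact (okl_R_monic okl _ w x rfl h).2
  · intro z _ hz
    by_cases hxz : bruhatLE cs x z
    · by_cases hzw : bruhatLE cs z w
      · have d1 := (okl_R_monic okl _ z x rfl hxz).1
        have d2 := okl.P_degree z (m _) w (m _) hzw hz
        have l1 := bruhat_length cs hxz
        have l2 := bruhat_length cs hzw
        apply coeff_eq_zero_of_natDegree_lt
        refine lt_of_le_of_lt natDegree_mul_le ?_
        omega
      · rw [okl.P_eq_zero _ (m _) _ (m _) hzw]; simp
    · rw [okl.R_eq_zero _ (m _) _ (m _) hxz]; simp
  · simp

lemma reflect_succ (N : ℕ) (p : ℤ[X]) (h : p.natDegree ≤ N) :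
    p.reflect (N + 1) = X * p.reflect N := by
  have := reflect_mul p 1 (F := N) (G := 1) h (by simp)
  rw [mul_one, reflect_one] at this
  rw [this]; ring

lemma okl_P_left (okl : ParabolicKL cs (∅ : Set B) y₀) (i : B) (w : W)
    (hw : cs.length (cs.simple i * w) < cs.length w) : ∀ (n : ℕ) (x : W),
    cs.length w - cs.length x ≤ n → cs.length x < cs.length (cs.simple i * x) →
      okl.P x w = okl.P (cs.simple i * x) w := by
  have m := mem_reps_empty cs
  intro n
  induction n with
  | zero =>
    intro x hn hx
    rw [okl.P_eq_zero x (m _) w (m _), okl.P_eq_zero _ (m _) w (m _)]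
    · intro h; have := bruhat_length cs h; omega
    · intro h
      have := bruhat_length cs (bruhat_left_lift1 cs h i hw)
      omega
  | succ n ih =>
    intro x hn hx
    by_cases hle : bruhatLE cs x w
    swap
    · rw [okl.P_eq_zero x (m _) w (m _) hle, okl.P_eq_zero _ (m _) w (m _)]
      intro h
      exact hle (bruhat_trans cs (bruhat_simple_mul cs x i hx) h)
    have hle' := bruhat_left_lift1 cs hle i hw
    have hl' := bruhat_length cs hle'
    have hsx : cs.length (cs.simple i * x) = cs.length x + 1 := by
      have := cs.length_simple_mul x i; omega
    have d1 := kl_degree okl (m _) (m _) hle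
    have d1' := okl.P_degree x (m _) w (m _) hle (by rintro rfl; omega)
    have d2 := kl_degree okl (m _) (m _) hle'
    have i1 := okl_inversion okl hle
    have i2 := okl_inversion okl hle'
    obtain ⟨N, hN⟩ : ∃ N, cs.length w - cs.length x = N + 1 :=
      ⟨cs.length w - cs.length x - 1, by omega⟩
    have hN' : cs.length w - cs.length (cs.simple i * x) = N := by omega
    rw [hN] at i1 d1 d1'
    rw [hN'] at i2 d2
    set c : W → ℤ[X] := fun z => okl.R x z - X * okl.R (cs.simple i * x) z with hc
    have hanti : ∀ z, c (cs.simple i * z) = - c z := okl_antisymm okl i x hx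
    have hsum : (okl.P x w - okl.P (cs.simple i * x) w).reflect (N + 1)
        = ∑ z : W, c z * okl.P z w := by
      rw [reflect_sub, i1, reflect_succ N (okl.P (cs.simple i * x) w) (by omega), i2,
        Finset.mul_sum, ← Finset.sum_sub_distrib]
      refine Finset.sum_congr rfl fun z _ => ?_
      simp only [hc]; ring
    have hcle : ∀ z, c z ≠ 0 → bruhatLE cs x z := by
      intro z hz
      by_contra hxz
      apply hz
      simp only [hc]
      rw [okl.R_eq_zero _ (m _) _ (m _) hxz, okl.R_eq_zero _ (m _) _ (m _)]
      · simp
      · intro h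
        exact hxz (bruhat_trans cs (bruhat_simple_mul cs x i hx) h)
    have hcx : c x = 1 := by
      simp only [hc]
      rw [okl.R_refl _ (m _), okl.R_eq_zero _ (m _) _ (m _)]
      · simp
      · intro h
        have := bruhat_length cs h
        omega
    have hre : ∑ z : W, c z * okl.P z w = - ∑ z : W, c z * okl.P (cs.simple i * z) w := by
      rw [← Finset.sum_neg_distrib]
      rw [← Equiv.sum_comp (Equiv.mulLeft (cs.simple i))]
      refine Finset.sum_congr rfl fun z _ => ?_
      simp only [Equiv.coe_mulLeft, hanti]
      ring
    have hne : x ≠ cs.simple i * x := by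
      intro h; rw [← h] at hx; omega
    have h2 : ∑ z : W, c z * okl.P z w + ∑ z : W, c z * okl.P z w
        = 2 * (okl.P x w - okl.P (cs.simple i * x) w) := by
      nth_rw 2 [hre]
      rw [← sub_eq_add_neg, ← Finset.sum_sub_distrib]
      rw [← Finset.sum_subset (Finset.subset_univ {x, cs.simple i * x})]
      · rw [Finset.sum_pair hne, hanti, hcx, cs.simple_mul_simple_cancel_left]
        ring
      · intro z _ hz
        simp only [Finset.mem_insert, Finset.mem_singleton, not_or] at hz
        by_cases hcz : c z = 0
        · rw [hcz]; ring
        have hxz := bruhat_length_lt cs (hcle z hcz) (Ne.symm hz.1)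
        have hcz' : c (cs.simple i * z) ≠ 0 := by rw [hanti]; simpa using hcz
        have hxz' := bruhat_length_lt cs (hcle _ hcz') (by
          rintro rfl; simp at hz)
        rcases lt_or_ge (cs.length z) (cs.length (cs.simple i * z)) with h | h
        · rw [ih z (by omega) h, sub_self]
        · have hnez := cs.length_simple_mul_ne z i
          have := ih (cs.simple i * z) (by omega)
            (by rw [cs.simple_mul_simple_cancel_left]; omega)
          rw [cs.simple_mul_simple_cancel_left] at this
          rw [this, sub_self]
    have hD : (okl.P x w - okl.P (cs.simple i * x) w).reflect (N + 1)
        = okl.P x w - okl.P (cs.simple i * x) w := by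
      rw [hsum]
      have : (2 : ℤ[X]) * ∑ z : W, c z * okl.P z w
          = 2 * (okl.P x w - okl.P (cs.simple i * x) w) := by rw [← h2]; ring
      exact mul_left_cancel₀ two_ne_zero this
    have := eq_zero_of_reflect (N + 1) _ ?_ hD
    · exact sub_eq_zero.1 this
    · have := natDegree_sub_le (okl.P x w) (okl.P (cs.simple i * x) w)
      have : max (okl.P x w).natDegree (okl.P (cs.simple i * x) w).natDegree ≤ N / 2 :=
        max_le (by omega) (by omega)
      omega

lemma okl_P_left' (okl : ParabolicKL cs (∅ : Set B) y₀) (i : B) (w : W)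
    (hw : cs.length (cs.simple i * w) < cs.length w) (x : W) :
      okl.P (cs.simple i * x) w = okl.P x w := by
  rcases lt_or_ge (cs.length x) (cs.length (cs.simple i * x)) with h | h
  · exact (okl_P_left okl i w hw _ x le_rfl h).symm
  · have hne := cs.length_simple_mul_ne x i
    have := okl_P_left okl i w hw _ (cs.simple i * x) le_rfl
      (by rw [cs.simple_mul_simple_cancel_left]; omega)
    rw [cs.simple_mul_simple_cancel_left] at this
    exact this

lemma okl_P_coset (okl : ParabolicKL cs (∅ : Set B) y₀) (J : Set B) (w : W)
    (hw : ∀ i ∈ J, cs.length (cs.simple i * w) < cs.length w) (x a : W)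
    (ha : a ∈ Subgroup.closure (cs.simple '' J)) :
      okl.P (a * x) w = okl.P x w := by
  obtain ⟨ω, hJ, -, rfl⟩ := closure_word cs J ha
  clear ha
  induction ω with
  | nil => simp
  | cons i ω ih =>
    rw [cs.wordProd_cons, mul_assoc, okl_P_left' okl i w (hw i (hJ i (by simp))),
      ih fun k hk => hJ k (by simp [hk])]

end okl

/-! ### Comparison of parabolic and ordinary polynomials -/

section comparison

open Polynomial

variable [Fintype W] {cs : CoxeterSystem M W} {y₀ : ℤ[X]}

/-- The elements of `W_J` as a finset. -/
noncomputable def parFinset (cs : CoxeterSystem M W) (J : Set B) : Finset W :=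
  Finset.univ.filter (fun a => a ∈ Subgroup.closure (cs.simple '' J))

lemma mem_parFinset (cs : CoxeterSystem M W) (J : Set B) (a : W) :
    a ∈ parFinset cs J ↔ a ∈ Subgroup.closure (cs.simple '' J) := by
  simp [parFinset]

lemma parFinset_sum_shift (cs : CoxeterSystem M W) (J : Set B) {k : B} (hk : k ∈ J)
    (f : W → ℤ[X]) :
    ∑ a ∈ parFinset cs J, f (cs.simple k * a) = ∑ a ∈ parFinset cs J, f a := by
  have hm : cs.simple k ∈ Subgroup.closure (cs.simple '' J) :=
    Subgroup.subset_closure ⟨k, hk, rfl⟩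
  refine Finset.sum_bij' (fun a _ => cs.simple k * a) (fun a _ => cs.simple k * a) ?_ ?_ ?_ ?_ ?_
  · intro a ha
    rw [mem_parFinset] at *
    exact Subgroup.mul_mem _ hm ha
  · intro a ha
    rw [mem_parFinset] at *
    exact Subgroup.mul_mem _ hm ha
  · intro a _; simp
  · intro a _; simp
  · intro a _; rfl

lemma sum_decomp (cs : CoxeterSystem M W) (J : Set B) (f : W → ℤ[X]) :
    ∑ x : W, f x = ∑ z ∈ Finset.univ.filter (fun z => z ∈ cosetReps cs J),
      ∑ a ∈ parFinset cs J, f (a * z) := by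
  rw [← Finset.sum_product']
  symm
  refine Finset.sum_bij (fun p _ => p.2 * p.1) ?_ ?_ ?_ ?_
  · intro p _; simp
  · rintro ⟨z, a⟩ h ⟨z', a'⟩ h' he
    simp only [Finset.mem_product, Finset.mem_filter, Finset.mem_univ, true_and,
      mem_parFinset] at h h'
    obtain ⟨h1, h2⟩ := decomp_unique cs J h.2 h.1 h'.2 h'.1 he
    rw [h1, h2]
  · intro x _
    obtain ⟨a, ha, z, hz, rfl⟩ := exists_decomp cs J x
    exact ⟨(z, a), by simp [mem_parFinset, ha, hz], rfl⟩
  · intro p _; rfl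

lemma pkl_R_eq (J : Set B) (pkl : ParabolicKL cs J (-1))
    (okl : ParabolicKL cs (∅ : Set B) y₀) (wJ : W)
    (hwJmem : wJ ∈ Subgroup.closure (cs.simple '' J))
    (hwJlong : ∀ u ∈ Subgroup.closure (cs.simple '' J), cs.length u ≤ cs.length wJ) :
    ∀ (n : ℕ) (z u : W), cs.length z = n → z ∈ cosetReps cs J → u ∈ cosetReps cs J →
      pkl.R u z = ∑ a ∈ parFinset cs J, okl.R (wJ * u) (a * z) := by
  have m := mem_reps_empty cs
  intro n
  induction n with
  | zero =>
    intro z u hn hz hu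
    by_cases hle : bruhatLE cs u z
    · obtain rfl := bruhat_eq_of_length cs hle (by omega)
      rw [pkl.R_refl _ hu, Finset.sum_eq_single wJ, okl.R_refl _ (m _)]
      · intro a ha hne
        rw [mem_parFinset] at ha
        apply okl.R_eq_zero _ (m _) _ (m _)
        intro h
        have := bruhat_eq_of_length cs h (by
          rw [length_add cs J ha hu, length_add cs J hwJmem hu]
          have := hwJlong a ha; omega)
        exact hne (mul_right_cancel this).symm
      · intro h; exact absurd ((mem_parFinset cs J wJ).2 hwJmem) h
    · rw [pkl.R_eq_zero _ hu _ hz hle, Finset.sum_eq_zero]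
      intro a ha
      rw [mem_parFinset] at ha
      exact okl.R_eq_zero _ (m _) _ (m _) fun h => hle (le_of_mul_le cs J hu hwJmem ha h)
  | succ n ih =>
    intro z u hn hz hu
    by_cases hle : bruhatLE cs u z
    swap
    · rw [pkl.R_eq_zero _ hu _ hz hle, Finset.sum_eq_zero]
      intro a ha
      rw [mem_parFinset] at ha
      exact okl.R_eq_zero _ (m _) _ (m _) fun h => hle (le_of_mul_le cs J hu hwJmem ha h)
    by_cases huz : u = z
    · subst huz
      rw [pkl.R_refl _ hu, Finset.sum_eq_single wJ, okl.R_refl _ (m _)]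
      · intro a ha hne
        rw [mem_parFinset] at ha
        apply okl.R_eq_zero _ (m _) _ (m _)
        intro h
        have := bruhat_eq_of_length cs h (by
          rw [length_add cs J ha hu, length_add cs J hwJmem hu]
          have := hwJlong a ha; omega)
        exact hne (mul_right_cancel this).symm
      · intro h; exact absurd ((mem_parFinset cs J wJ).2 hwJmem) h
    have hz1 : z ≠ 1 := by rintro rfl; simp at hn
    obtain ⟨i, hi⟩ := cs.exists_rightDescent_of_ne_one hz1
    have hi' : cs.length (z * cs.simple i) < cs.length z := hi
    rw [cs.isRightDescent_iff] at hi
    have hzs := reps_mul_simple cs J hz i hi'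
    have haz : ∀ a ∈ parFinset cs J, cs.length (a * z * cs.simple i) < cs.length (a * z) := by
      intro a ha
      rw [mem_parFinset] at ha
      rw [mul_assoc, length_add cs J ha hz, length_add cs J ha hzs]
      omega
    obtain ⟨r1, r2, r3⟩ := pkl.R_rec u hu z hz hle huz i hi'
    have hune := cs.length_mul_simple_ne u i
    rcases lt_or_gt_of_ne hune with hus | hus
    · have husr := reps_mul_simple cs J hu i hus
      rw [r1 hus, ih _ _ (by omega) hzs husr]
      refine Finset.sum_congr rfl fun a ha => ?_
      rw [okl_R_down okl (wJ * u) (a * z) i (haz a ha)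
        (by rw [mul_assoc, length_add cs J hwJmem husr, length_add cs J hwJmem hu]; omega),
        mul_assoc, mul_assoc]
    by_cases husr : u * cs.simple i ∈ cosetReps cs J
    · rw [r2 hus husr, ih _ _ (by omega) hzs husr, ih _ _ (by omega) hzs hu,
        Finset.mul_sum, Finset.mul_sum, ← Finset.sum_add_distrib]
      refine Finset.sum_congr rfl fun a ha => ?_
      rw [okl_R_up okl (wJ * u) (a * z) i (haz a ha)
        (by rw [mul_assoc wJ, length_add cs J hwJmem husr, length_add cs J hwJmem hu]; omega),
        mul_assoc wJ, mul_assoc a]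
    · rw [r3 hus husr, ih _ _ (by omega) hzs hu]
      obtain ⟨k, hk, hku⟩ := deodhar cs J hu i hus husr
      obtain ⟨k', hk', hkk⟩ := wJ_conj cs J wJ hwJmem hwJlong hk
      have e : wJ * u * cs.simple i = cs.simple k' * (wJ * u) := by
        rw [mul_assoc, ← hku, ← mul_assoc, hkk, mul_assoc]
      have hlt : cs.length (cs.simple k' * (wJ * u)) < cs.length (wJ * u) := by
        have h1 := wJ_left cs J wJ hwJmem hwJlong hk'
        rw [← mul_assoc, length_add cs J (Subgroup.mul_mem _
          (Subgroup.subset_closure ⟨k', hk', rfl⟩) hwJmem) hu, length_add cs J hwJmem hu]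
        omega
      have step : ∑ a ∈ parFinset cs J, okl.R (wJ * u) (a * z)
          = ∑ a ∈ parFinset cs J,
            okl.R (cs.simple k' * (wJ * u)) (a * (z * cs.simple i)) := by
        refine Finset.sum_congr rfl fun a ha => ?_
        rw [okl_R_down okl (wJ * u) (a * z) i (haz a ha) (by rw [e]; exact hlt), e, mul_assoc a]
      rw [step]
      set z' := z * cs.simple i
      have anti := okl_antisymm okl k' (cs.simple k' * (wJ * u))
        (by rw [cs.simple_mul_simple_cancel_left]; exact hlt)
      simp only [cs.simple_mul_simple_cancel_left] at anti
      set S := ∑ a ∈ parFinset cs J, (okl.R (cs.simple k' * (wJ * u)) (a * z')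
        - X * okl.R (wJ * u) (a * z')) with hS
      have hneg : S = -S := by
        conv_lhs => rw [hS, ← parFinset_sum_shift cs J hk']
        rw [hS, ← Finset.sum_neg_distrib]
        refine Finset.sum_congr rfl fun a _ => ?_
        rw [mul_assoc, anti]
      have h0 : S = 0 := self_eq_neg.1 hneg
      rw [hS, Finset.sum_sub_distrib, ← Finset.mul_sum, sub_eq_zero] at h0
      rw [h0]
      ring

lemma pkl_P_eq (J : Set B) (pkl : ParabolicKL cs J (-1))
    (okl : ParabolicKL cs (∅ : Set B) y₀) (wJ : W)
    (hwJmem : wJ ∈ Subgroup.closure (cs.simple '' J))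
    (hwJlong : ∀ u ∈ Subgroup.closure (cs.simple '' J), cs.length u ≤ cs.length wJ)
    (v : W) (hv : v ∈ cosetReps cs J) :
    ∀ (n : ℕ) (u : W), cs.length v - cs.length u ≤ n → u ∈ cosetReps cs J →
      pkl.P u v = okl.P (wJ * u) (wJ * v) := by
  have m := mem_reps_empty cs
  have hdesc : ∀ i ∈ J, cs.length (cs.simple i * (wJ * v)) < cs.length (wJ * v) := by
    intro i hi
    have h1 := wJ_left cs J wJ hwJmem hwJlong hi
    rw [← mul_assoc, length_add cs J (Subgroup.mul_mem _
      (Subgroup.subset_closure ⟨i, hi, rfl⟩) hwJmem) hv, length_add cs J hwJmem hv]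
    omega
  intro n
  induction n with
  | zero =>
    intro u hn hu
    by_cases hle : bruhatLE cs u v
    · obtain rfl := bruhat_eq_of_length cs hle (by omega)
      rw [pkl.P_refl _ hu, okl.P_refl _ (m _)]
    · rw [pkl.P_eq_zero _ hu _ hv hle, okl.P_eq_zero _ (m _) _ (m _)]
      exact fun h => hle (le_of_mul_le cs J hu hwJmem hwJmem h)
  | succ n ih =>
    intro u hn hu
    by_cases hle : bruhatLE cs u v
    swap
    · rw [pkl.P_eq_zero _ hu _ hv hle, okl.P_eq_zero _ (m _) _ (m _)]
      exact fun h => hle (le_of_mul_le cs J hu hwJmem hwJmem h)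
    by_cases huv : u = v
    · subst huv
      rw [pkl.P_refl _ hu, okl.P_refl _ (m _)]
    have hle' := mul_le_mul_rep cs J hu hv hwJmem hle
    have hlen := bruhat_length_lt cs hle huv
    have hN : cs.length (wJ * v) - cs.length (wJ * u) = cs.length v - cs.length u := by
      rw [length_add cs J hwJmem hu, length_add cs J hwJmem hv]; omega
    have d1 := pkl.P_degree u hu v hv hle huv
    have d2 := okl.P_degree _ (m (wJ * u)) _ (m (wJ * v)) hle'
      (fun h => huv (mul_left_cancel h))
    have i1 := kl_inversion pkl hu hv hle
    have i2 := okl_inversion okl hle'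
    rw [hN] at i2 d2
    rw [sum_decomp cs J] at i2
    have i3 : (okl.P (wJ * u) (wJ * v)).reflect (cs.length v - cs.length u)
        = ∑ z ∈ Finset.univ.filter (fun z => z ∈ cosetReps cs J),
          pkl.R u z * okl.P (wJ * z) (wJ * v) := by
      rw [i2]
      refine Finset.sum_congr rfl fun z hz => ?_
      simp only [Finset.mem_filter, Finset.mem_univ, true_and] at hz
      rw [pkl_R_eq J pkl okl wJ hwJmem hwJlong _ z u rfl hz hu, Finset.sum_mul]
      refine Finset.sum_congr rfl fun a ha => ?_
      rw [mem_parFinset] at ha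
      rw [okl_P_coset okl J _ hdesc z a ha, okl_P_coset okl J _ hdesc z wJ hwJmem]
    have hD : (pkl.P u v - okl.P (wJ * u) (wJ * v)).reflect (cs.length v - cs.length u)
        = pkl.P u v - okl.P (wJ * u) (wJ * v) := by
      rw [reflect_sub, i1, i3, ← Finset.sum_sub_distrib, Finset.sum_eq_single u]
      · rw [pkl.R_refl _ hu]; ring
      · intro z hz hne
        simp only [Finset.mem_filter, Finset.mem_univ, true_and] at hz
        by_cases huz : bruhatLE cs u z
        · have := bruhat_length_lt cs huz (Ne.symm hne)
          rw [ih z (by omega) hz, sub_self]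
        · rw [pkl.R_eq_zero _ hu _ hz huz]; ring
      · intro h; simp [hu] at h
    have := eq_zero_of_reflect _ _ ?_ hD
    · exact sub_eq_zero.1 this
    · have := natDegree_sub_le (pkl.P u v) (okl.P (wJ * u) (wJ * v))
      have : max (pkl.P u v).natDegree (okl.P (wJ * u) (wJ * v)).natDegree
          ≤ (cs.length v - cs.length u - 1) / 2 := max_le (by omega) (by omega)
      omega

end comparison

/-- Deodhar's parabolic Kazhdan–Lusztig polynomials of type `-1`
satisfy `P^{J,-1}_{u,v} = P_{w_J u, w_J v}` for all `u, v ∈ ᴶW`, where the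
`P_{x,w}` are the ordinary Kazhdan–Lusztig polynomials (the case `J = ∅`) and
`w_J` is the longest element of `W_J`.  In particular `P^{J,-1}_{u,v}` has
constant term `1` whenever `u ≤ v`. -/
theorem stmt12 [Fintype W] (cs : CoxeterSystem M W) (J : Set B)
    (y₀ : Polynomial ℤ)
    (pkl : ParabolicKL cs J (-1))            -- type `-1` parabolic KL polynomials
    (okl : ParabolicKL cs (∅ : Set B) y₀)    -- ordinary KL polynomials
    (wJ : W) (hwJmem : wJ ∈ Subgroup.closure (cs.simple '' J))
    (hwJlong : ∀ u ∈ Subgroup.closure (cs.simple '' J), cs.length u ≤ cs.length wJ)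
    (u v : W) (hu : u ∈ cosetReps cs J) (hv : v ∈ cosetReps cs J) :
    pkl.P u v = okl.P (wJ * u) (wJ * v)
      ∧ (bruhatLE cs u v → (pkl.P u v).coeff 0 = 1) := by
  have h := pkl_P_eq J pkl okl wJ hwJmem hwJlong v hv _ u le_rfl hu
  refine ⟨h, fun hle => ?_⟩
  rw [h]
  exact okl_const okl (mul_le_mul_rep cs J hu hv hwJmem hle)
end

section
/- Deodhar's parabolic Kazhdan–Lusztig polynomials of type q satisfy P^{J,q}_{u,v}(q) = ∑_{w ∈ W_J} (−1)^{ℓ(w)} P_{wu, v}(q) for all u, v ∈ ᴶW, where P_{x,w} are the ordinary Kazhdan–Lusztig polynomials. -/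
open scoped Classical Polynomial

variable {B W : Type*} [Group W] {M : CoxeterMatrix B}

namespace KLProof

section Cox

open CoxeterSystem

/-- Sign action of a simple reflection on `W × ZMod 2`. -/
noncomputable def sgnFun (cs : CoxeterSystem M W) (i : B) : Function.End (W × ZMod 2) :=
  fun p => (cs.simple i * p.1 * cs.simple i, p.2 + if p.1 = cs.simple i then 1 else 0)

theorem sgnFun_prod (cs : CoxeterSystem M W) (ω : List B) (p : W × ZMod 2) :
    (ω.map (sgnFun cs)).prod p =
      (cs.wordProd ω * p.1 * (cs.wordProd ω)⁻¹, p.2 + ((cs.rightInvSeq ω).count p.1 : ℕ)) := by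
  induction ω with
  | nil => simp [Function.End.one_def]
  | cons i ω ih =>
    simp only [List.map_cons, List.prod_cons, Function.End.mul_def, Function.comp, ih]
    simp only [sgnFun, rightInvSeq, List.count_cons, wordProd_cons]
    refine Prod.ext ?_ ?_
    · simp [mul_assoc]
    · simp only [Nat.cast_add, add_assoc]
      congr 2
      have : (cs.wordProd ω * p.1 * (cs.wordProd ω)⁻¹ = cs.simple i) ↔
          ((cs.wordProd ω)⁻¹ * cs.simple i * cs.wordProd ω = p.1) := by
        constructor
        · intro h; rw [← h]; group
        · intro h; rw [← h]; group
      simp only [this, beq_iff_eq]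
      split_ifs <;> simp

theorem reverse_alternatingWord (i j : B) (m : ℕ) :
    (alternatingWord i j m).reverse =
      if Even m then alternatingWord j i m else alternatingWord i j m := by
  induction m generalizing i j with
  | zero => simp [alternatingWord]
  | succ m ih =>
    rw [alternatingWord_succ, List.concat_eq_append, List.reverse_append, ih]
    simp only [List.reverse_singleton, List.singleton_append]
    by_cases h : Even m
    · have h' : ¬ Even (m+1) := by simpa [Nat.even_add_one] using h
      rw [if_pos h, if_neg h', ← List.concat_eq_append, ← alternatingWord_succ, alternatingWord_succ', if_pos h]
    · have h' : Even (m+1) := by simpa [Nat.even_add_one] using h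
      rw [if_neg h, if_pos h', alternatingWord_succ', if_neg h]

theorem even_count_lis (cs : CoxeterSystem M W) (i j : B) (t : W) :
    Even ((cs.leftInvSeq (alternatingWord i j (2 * M i j))).count t) := by
  set m := M i j with hm
  set L := cs.leftInvSeq (alternatingWord i j (2 * m)) with hL
  have hlen : L.length = 2 * m := by simp [hL]
  have hget : ∀ k (h : k < L.length), L[k] = cs.simple i * (cs.simple j * cs.simple i) ^ k := by
    intro k h
    have := cs.getElem_leftInvSeq_alternatingWord i j m k (by omega)
    simp only [hL]
    rw [this, prod_alternatingWord_eq_mul_pow]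
    have h1 : ¬ Even (2 * k + 1) := by simp
    rw [if_neg h1]
    congr 2
    omega
  have hsplit : L = L.take m ++ L.take m := by
    apply List.ext_getElem
    · simp [hlen]; omega
    · intro k h1 h2
      rw [List.getElem_append]
      split_ifs with h3
      · simp
      · simp only [List.getElem_take]
        rw [hget, hget]
        simp only [List.length_take, hlen] at h3 ⊢
        have hmin : min m (2 * m) = m := by omega
        rw [hmin] at h3 ⊢
        have hk : k = m + (k - m) := by omega
        conv_lhs => rw [hk, pow_add]
        have : (cs.simple j * cs.simple i) ^ m = 1 := cs.simple_mul_simple_pow' i j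
        rw [this, one_mul]
  rw [hsplit, List.count_append]
  exact ⟨_, rfl⟩

theorem sgn_liftable (cs : CoxeterSystem M W) : M.IsLiftable (sgnFun cs) := by
  intro i j
  have h1 : ∀ m : ℕ, (sgnFun cs i * sgnFun cs j) ^ m =
      ((alternatingWord i j (2 * m)).map (sgnFun cs)).prod := by
    intro m
    induction m with
    | zero => simp [alternatingWord]
    | succ m ih =>
      have : 2 * (m + 1) = (2 * m + 1) + 1 := by ring
      rw [pow_succ', ih, this, alternatingWord_succ', alternatingWord_succ']
      simp [mul_assoc]
  rw [h1]
  funext p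
  rw [sgnFun_prod]
  have hπ : cs.wordProd (alternatingWord i j (2 * M i j)) = 1 := by
    rw [prod_alternatingWord_eq_mul_pow]; simp
  have hc : (cs.rightInvSeq (alternatingWord i j (2 * M i j))).count p.1 =
      (cs.leftInvSeq (alternatingWord j i (2 * M j i))).count p.1 := by
    have := reverse_alternatingWord i j (2 * M i j)
    rw [if_pos (by simp)] at this
    rw [M.symmetric j i, ← this, leftInvSeq_reverse, List.count_reverse]
  have he : (((cs.rightInvSeq (alternatingWord i j (2 * M i j))).count p.1 : ℕ) : ZMod 2) = 0 := by
    rw [hc, ZMod.natCast_eq_zero_iff_even]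
    exact even_count_lis cs j i p.1
  rw [he, hπ]
  simp [Function.End.one_def]

noncomputable def sgnHom (cs : CoxeterSystem M W) : W →* Function.End (W × ZMod 2) :=
  cs.lift ⟨sgnFun cs, sgn_liftable cs⟩

theorem sgnHom_wordProd (cs : CoxeterSystem M W) (ω : List B) (p : W × ZMod 2) :
    sgnHom cs (cs.wordProd ω) p =
      (cs.wordProd ω * p.1 * (cs.wordProd ω)⁻¹, p.2 + ((cs.rightInvSeq ω).count p.1 : ℕ)) := by
  rw [← sgnFun_prod, wordProd, map_list_prod, List.map_map]
  have : (⇑(sgnHom cs) ∘ cs.simple) = sgnFun cs :=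
    funext fun i => cs.lift_apply_simple (sgn_liftable cs) i
  rw [this]

theorem sgnHom_add (cs : CoxeterSystem M W) (w t : W) (a : ZMod 2) :
    sgnHom cs w (t, a) = (w * t * w⁻¹, (sgnHom cs w (t, 0)).2 + a) := by
  obtain ⟨ω, rfl⟩ := cs.wordProd_surjective w
  simp [sgnHom_wordProd, add_comm]

theorem sgnHom_refl (cs : CoxeterSystem M W) (t : W) (ht : cs.IsReflection t) (a : ZMod 2) :
    sgnHom cs t (t, a) = (t, a + 1) := by
  obtain ⟨g, i, rfl⟩ := ht
  have hs : ∀ b, sgnHom cs (cs.simple i) (cs.simple i, b) = (cs.simple i, b + 1) := by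
    intro b
    have := sgnHom_wordProd cs [i] (cs.simple i, b)
    simpa using this
  have h1 : ∀ (x y : W) p, sgnHom cs (x * y) p = sgnHom cs x (sgnHom cs y p) := by
    intro x y p; rw [map_mul]; rfl
  have h2 : sgnHom cs g (sgnHom cs g⁻¹ (g * cs.simple i * g⁻¹, a)) = (g * cs.simple i * g⁻¹, a) := by
    rw [← h1]; simp [Function.End.one_def]
  have h3 := sgnHom_add cs g⁻¹ (g * cs.simple i * g⁻¹) a
  have h4 : g⁻¹ * (g * cs.simple i * g⁻¹) * g⁻¹⁻¹ = cs.simple i := by group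
  rw [h4] at h3
  rw [h3, sgnHom_add] at h2
  rw [h1, h1, h3, hs, sgnHom_add]
  have := congrArg Prod.snd h2
  simp only at this
  refine Prod.ext rfl ?_
  simp only
  rw [← add_assoc, this]

/-- Strong exchange: a right inversion appears in the right inversion sequence of every word. -/
theorem mem_ris (cs : CoxeterSystem M W) (ω : List B) (t : W) (ht : cs.IsReflection t)
    (h : cs.length (cs.wordProd ω * t) < cs.length (cs.wordProd ω)) : t ∈ cs.rightInvSeq ω := by
  by_contra hn
  have h0 : sgnHom cs (cs.wordProd ω) (t, 0) = (cs.wordProd ω * t * (cs.wordProd ω)⁻¹, 0) := by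
    rw [sgnHom_wordProd]; simp [List.count_eq_zero_of_not_mem hn]
  obtain ⟨ω', hr, hω'⟩ := cs.exists_isReduced (cs.wordProd ω * t)
  have h1 : sgnHom cs (cs.wordProd ω * t) (t, 0) =
      sgnHom cs (cs.wordProd ω) (sgnHom cs t (t, 0)) := by rw [map_mul]; rfl
  rw [sgnHom_refl cs t ht, sgnHom_add cs (cs.wordProd ω), h0] at h1
  have h2 : t ∈ cs.rightInvSeq ω' := by
    by_contra hn'
    rw [hω', sgnHom_wordProd] at h1
    have := congrArg Prod.snd h1
    simp [List.count_eq_zero_of_not_mem hn'] at this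
  have h3 := (cs.isRightInversion_of_mem_rightInvSeq hr h2).2
  rw [← hω', mul_assoc, ht.mul_self, mul_one] at h3
  omega

theorem exchange_right (cs : CoxeterSystem M W) (ω : List B) (t : W) (ht : cs.IsReflection t)
    (h : cs.length (cs.wordProd ω * t) < cs.length (cs.wordProd ω)) :
    ∃ j < ω.length, cs.wordProd ω * t = cs.wordProd (ω.eraseIdx j) := by
  obtain ⟨j, hj, hjt⟩ := List.getElem_of_mem (mem_ris cs ω t ht h)
  refine ⟨j, by simpa using hj, ?_⟩
  rw [← cs.wordProd_mul_getD_rightInvSeq, List.getD_eq_getElem _ _ hj, hjt]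

theorem exchange_left (cs : CoxeterSystem M W) (ω : List B) (t : W) (ht : cs.IsReflection t)
    (h : cs.length (t * cs.wordProd ω) < cs.length (cs.wordProd ω)) :
    ∃ j < ω.length, t * cs.wordProd ω = cs.wordProd (ω.eraseIdx j) := by
  have h1 : cs.length (cs.wordProd ω.reverse * t) < cs.length (cs.wordProd ω.reverse) := by
    rw [wordProd_reverse, length_inv, ← length_inv]
    simpa [ht.inv] using h
  have hm := mem_ris cs ω.reverse t ht h1
  rw [rightInvSeq_reverse, List.mem_reverse] at hm
  obtain ⟨j, hj, hjt⟩ := List.getElem_of_mem hm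
  refine ⟨j, by simpa using hj, ?_⟩
  rw [← cs.getD_leftInvSeq_mul_wordProd, List.getD_eq_getElem _ _ hj, hjt]

/-- Every word has a reduced subword with the same product. -/
theorem exists_reduced_sublist (cs : CoxeterSystem M W) (ω : List B) :
    ∃ ω' : List B, ω'.Sublist ω ∧ cs.IsReduced ω' ∧ cs.wordProd ω' = cs.wordProd ω := by
  induction ω with
  | nil => exact ⟨[], List.Sublist.refl _, by simp [CoxeterSystem.IsReduced], rfl⟩
  | cons i ω ih =>
    obtain ⟨ω', hs, hr, hp⟩ := ih
    by_cases h : cs.length (cs.simple i * cs.wordProd ω') < cs.length (cs.wordProd ω')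
    · obtain ⟨j, hj, he⟩ := exchange_left cs ω' _ (cs.isReflection_simple i) h
      refine ⟨ω'.eraseIdx j, ((List.eraseIdx_sublist _ _).trans hs).cons _, ?_, ?_⟩
      · unfold CoxeterSystem.IsReduced at hr ⊢
        rw [← he, List.length_eraseIdx_of_lt hj]
        have := cs.length_simple_mul (cs.wordProd ω') i
        omega
      · rw [← he, wordProd_cons, hp]
    · refine ⟨i :: ω', hs.cons_cons i, ?_, by rw [wordProd_cons, wordProd_cons, hp]⟩
      unfold CoxeterSystem.IsReduced at hr ⊢
      rw [wordProd_cons, List.length_cons]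
      have := cs.length_simple_mul (cs.wordProd ω') i
      omega

/-! ### Bruhat order -/

theorem exists_word (cs : CoxeterSystem M W) (y : W) :
    ∃ ω : List B, cs.IsReduced ω ∧ cs.wordProd ω = y := by
  obtain ⟨ω, h, h'⟩ := cs.exists_isReduced y
  exact ⟨ω, h, h'.symm⟩

theorem bruhat_refl (cs : CoxeterSystem M W) (x : W) : bruhatLE cs x x := by
  obtain ⟨ω, h, h'⟩ := exists_word cs x
  exact ⟨ω, h, h', ω, List.Sublist.refl _, h, h'⟩

theorem bruhat_length (cs : CoxeterSystem M W) {x y : W} (h : bruhatLE cs x y) :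
    cs.length x ≤ cs.length y := by
  obtain ⟨ω, h1, rfl, ω', h2, h3, rfl⟩ := h
  rw [h1.eq, h3.eq]; exact h2.length_le

theorem bruhat_length_lt (cs : CoxeterSystem M W) {x y : W} (h : bruhatLE cs x y) (hne : x ≠ y) :
    cs.length x < cs.length y := by
  obtain ⟨ω, h1, rfl, ω', h2, h3, rfl⟩ := h
  rw [h1.eq, h3.eq]
  refine lt_of_le_of_ne h2.length_le fun he => hne ?_
  rw [h2.eq_of_length he]

/-- One step of the chain version of the Bruhat order. -/
def stepR (cs : CoxeterSystem M W) (a b : W) : Prop :=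
  ∃ t, cs.IsReflection t ∧ b = t * a ∧ cs.length a < cs.length b

theorem step_mul (cs : CoxeterSystem M W) {a b : W} (h : stepR cs a b) (i : B) :
    stepR cs (cs.simple i * a) (cs.simple i * b) ∨ cs.simple i * a = b := by
  obtain ⟨t, ht, rfl, hl⟩ := h
  have ht' : cs.IsReflection (cs.simple i * t * cs.simple i) := by
    simpa using ht.conj (cs.simple i)
  have e1 : cs.simple i * (t * a) = (cs.simple i * t * cs.simple i) * (cs.simple i * a) := by
    simp [mul_assoc]
  by_cases hlt : cs.length (cs.simple i * a) < cs.length (cs.simple i * (t * a))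
  · exact Or.inl ⟨_, ht', e1, hlt⟩
  · right
    have hne := ht'.length_mul_right_ne (cs.simple i * a)
    rw [← e1] at hne
    have h1 := cs.length_simple_mul a i
    have h2 := cs.length_simple_mul (t * a) i
    obtain ⟨β, hβ, hβ'⟩ := exists_word cs (cs.simple i * (t * a))
    have hb : cs.wordProd (i :: β) = t * a := by rw [wordProd_cons, hβ']; simp
    have hta : t * cs.wordProd (i :: β) = a := by rw [hb, ← mul_assoc, ht.mul_self, one_mul]
    obtain ⟨j, hj, he⟩ := exchange_left cs (i :: β) t ht (by rw [hta, hb]; exact hl)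
    rw [hta] at he
    cases j with
    | zero =>
      simp only [List.eraseIdx_zero, List.tail_cons] at he
      rw [wordProd_cons, ← he] at hb
      exact hb
    | succ j =>
      exfalso
      rw [List.eraseIdx_cons_succ, wordProd_cons] at he
      have h3 : cs.simple i * a = cs.wordProd (β.eraseIdx j) := by rw [he]; simp
      have h4 := cs.length_wordProd_le (β.eraseIdx j)
      rw [← h3, List.length_eraseIdx_of_lt (by simpa using hj)] at h4
      have h5 := hβ.eq
      rw [hβ'] at h5
      have : j < β.length := by simpa using hj
      omega

theorem chain_mul (cs : CoxeterSystem M W) {a b : W} (h : Relation.ReflTransGen (stepR cs) a b)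
    (i : B) : Relation.ReflTransGen (stepR cs) (cs.simple i * a) b ∨
      Relation.ReflTransGen (stepR cs) (cs.simple i * a) (cs.simple i * b) := by
  induction h using Relation.ReflTransGen.head_induction_on with
  | refl => exact Or.inr .refl
  | head h1 h2 ih =>
    rcases step_mul cs h1 i with h3 | h3
    · rcases ih with h4 | h4
      · exact Or.inl (.head h3 h4)
      · exact Or.inr (.head h3 h4)
    · left; rw [h3]; exact h2

theorem chain_of_sublist (cs : CoxeterSystem M W) (ω : List B) (hω : cs.IsReduced ω) (ω' : List B)
    (h : ω'.Sublist ω) :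
    Relation.ReflTransGen (stepR cs) (cs.wordProd ω') (cs.wordProd ω) := by
  induction ω generalizing ω' with
  | nil => rw [List.sublist_nil.mp h]
  | cons i ω ih =>
    have hr : cs.IsReduced ω := by simpa using hω.drop 1
    have hstep : stepR cs (cs.wordProd ω) (cs.wordProd (i :: ω)) := by
      refine ⟨_, cs.isReflection_simple i, wordProd_cons _ _ _, ?_⟩
      rw [hω.eq, hr.eq]; simp
    cases h with
    | cons _ h' => exact .tail (ih hr _ h') hstep
    | cons_cons _ h' =>
      rename_i l
      rw [wordProd_cons cs i l]
      rcases chain_mul cs (ih hr _ h') i with h4 | h4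
      · exact .tail h4 hstep
      · rw [wordProd_cons]; exact h4

theorem sublist_of_chain (cs : CoxeterSystem M W) {x y : W}
    (h : Relation.ReflTransGen (stepR cs) x y) (ω : List B) 
    (hω' : cs.wordProd ω = y) :
    ∃ ω' : List B, ω'.Sublist ω ∧ cs.IsReduced ω' ∧ cs.wordProd ω' = x := by
  induction h generalizing ω with
  | refl =>
    obtain ⟨ω', h1, h2, h3⟩ := exists_reduced_sublist cs ω
    exact ⟨ω', h1, h2, h3.trans hω'⟩
  | @tail b c h1 h2 ih =>
    obtain ⟨t, ht, rfl, hl⟩ := h2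
    have e : t * cs.wordProd ω = b := by rw [hω', ← mul_assoc, ht.mul_self, one_mul]
    obtain ⟨j, hj, he⟩ := exchange_left cs ω t ht (by rw [e, hω']; exact hl)
    obtain ⟨ω', a, b, c⟩ := ih (ω.eraseIdx j) (he.symm.trans e)
    exact ⟨ω', a.trans (List.eraseIdx_sublist _ _), b, c⟩

theorem bruhat_trans (cs : CoxeterSystem M W) {x y z : W} (h1 : bruhatLE cs x y)
    (h2 : bruhatLE cs y z) : bruhatLE cs x z := by
  obtain ⟨ω, a, rfl, ω', b, c, rfl⟩ := h1
  obtain ⟨ζ, d, rfl, ζ', e, f, g⟩ := h2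
  have := chain_of_sublist cs ω a ω' b
  obtain ⟨ξ, p, q, r⟩ := sublist_of_chain cs this ζ' g
  exact ⟨ζ, d, rfl, ξ, p.trans e, q, r⟩

/-- If `x ≤ y` and `x < x t` going down, i.e. `ℓ(xs) < ℓ(x)`, then `xs ≤ y`. -/
theorem bruhat_down_right (cs : CoxeterSystem M W) {x : W} (i : B)
    (h2 : cs.length (x * cs.simple i) < cs.length x) : bruhatLE cs (x * cs.simple i) x := by
  obtain ⟨ω, a, b⟩ := exists_word cs (x * cs.simple i)
  have e : cs.wordProd (ω ++ [i]) = x := by rw [wordProd_append, b]; simp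
  refine ⟨ω ++ [i], ?_, e, ω, List.sublist_append_left _ _, a, b⟩
  unfold CoxeterSystem.IsReduced at a ⊢
  rw [e]; rw [b] at a
  have := cs.length_mul_simple x i
  simp; omega

theorem bruhat_down_left (cs : CoxeterSystem M W) {x : W} (i : B)
    (h2 : cs.length (cs.simple i * x) < cs.length x) : bruhatLE cs (cs.simple i * x) x := by
  obtain ⟨ω, a, b⟩ := exists_word cs (cs.simple i * x)
  have e : cs.wordProd (i :: ω) = x := by rw [wordProd_cons, b]; simp
  refine ⟨i :: ω, ?_, e, ω, List.sublist_cons_self _ _, a, b⟩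
  unfold CoxeterSystem.IsReduced at a ⊢
  rw [e]; rw [b] at a
  have := cs.length_simple_mul x i
  simp; omega

theorem bruhat_mul_mul (cs : CoxeterSystem M W) {x y : W} (i : B)
    (hx : cs.length x < cs.length (x * cs.simple i))
    (hy : cs.length y < cs.length (y * cs.simple i)) (h : bruhatLE cs x y) :
    bruhatLE cs (x * cs.simple i) (y * cs.simple i) := by
  obtain ⟨ω, a, rfl, ω', b, c, rfl⟩ := h
  have e : ∀ l : List B, cs.wordProd (l ++ [i]) = cs.wordProd l * cs.simple i := by
    intro l; rw [wordProd_append]; simp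
  refine ⟨ω ++ [i], ?_, e _, ω' ++ [i], b.append_right _, ?_, e _⟩
  all_goals
    unfold CoxeterSystem.IsReduced at *
    rw [e]
    have h1 := cs.length_mul_simple (cs.wordProd ω) i
    have h2 := cs.length_mul_simple (cs.wordProd ω') i
    simp; omega

/-! ### Parabolic subgroups -/

/-- The parabolic subgroup. -/
abbrev WJ (cs : CoxeterSystem M W) (J : Set B) : Subgroup W := Subgroup.closure (cs.simple '' J)

theorem simple_mem_WJ (cs : CoxeterSystem M W) {J : Set B} {i : B} (hi : i ∈ J) :
    cs.simple i ∈ WJ cs J := Subgroup.subset_closure ⟨i, hi, rfl⟩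

theorem WJ_induction (cs : CoxeterSystem M W) (J : Set B) (p : W → Prop) (h1 : p 1)
    (hs : ∀ i ∈ J, ∀ w ∈ WJ cs J, p w → p (cs.simple i * w)) (w : W) (hw : w ∈ WJ cs J) : p w := by
  induction hw using Subgroup.closure_induction_left with
  | one => exact h1
  | mul_left x hx y hy ih =>
    obtain ⟨i, hi, rfl⟩ := hx
    exact hs i hi y hy ih
  | inv_mul_cancel x hx y hy ih =>
    obtain ⟨i, hi, rfl⟩ := hx
    rw [inv_simple]
    exact hs i hi y hy ih

theorem WJ_word (cs : CoxeterSystem M W) (J : Set B) (w : W) (hw : w ∈ WJ cs J) :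
    ∃ ω : List B, cs.IsReduced ω ∧ cs.wordProd ω = w ∧ ∀ i ∈ ω, i ∈ J := by
  have : ∃ ω : List B, cs.wordProd ω = w ∧ ∀ i ∈ ω, i ∈ J := by
    refine WJ_induction cs J (fun w => ∃ ω : List B, cs.wordProd ω = w ∧ ∀ i ∈ ω, i ∈ J)
      ⟨[], by simp, by simp⟩ ?_ w hw
    rintro i hi w - ⟨ω, rfl, h⟩
    exact ⟨i :: ω, wordProd_cons _ _ _, by simpa using ⟨hi, h⟩⟩
  obtain ⟨ω, h1, h2⟩ := this
  obtain ⟨ω', h3, h4, h5⟩ := exists_reduced_sublist cs ω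
  exact ⟨ω', h4, h5.trans h1, fun i hi => h2 i (h3.subset hi)⟩

theorem WJ_wordProd_mem (cs : CoxeterSystem M W) (J : Set B) (ω : List B) (h : ∀ i ∈ ω, i ∈ J) :
    cs.wordProd ω ∈ WJ cs J := by
  induction ω with
  | nil => simp
  | cons i ω ih =>
    rw [wordProd_cons]
    exact mul_mem (simple_mem_WJ cs (h i (by simp))) (ih fun j hj => h j (by simp [hj]))

/-- Length-increasing induction on a parabolic subgroup. -/
theorem WJ_induction' (cs : CoxeterSystem M W) (J : Set B) (p : W → Prop) (h1 : p 1)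
    (hs : ∀ i ∈ J, ∀ w ∈ WJ cs J, cs.length w < cs.length (cs.simple i * w) →
      p w → p (cs.simple i * w)) (w : W) (hw : w ∈ WJ cs J) : p w := by
  obtain ⟨ω, hr, rfl, hJ⟩ := WJ_word cs J w hw
  clear hw
  induction ω with
  | nil => simpa using h1
  | cons i ω ih =>
    have hr' : cs.IsReduced ω := by simpa using hr.drop 1
    have hJ' : ∀ j ∈ ω, j ∈ J := fun j hj => hJ j (by simp [hj])
    have := hr.eq
    rw [wordProd_cons] at this ⊢
    refine hs i (hJ i (by simp)) _ (WJ_wordProd_mem cs J ω hJ') ?_ (ih hr' hJ')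
    rw [this, hr'.eq]; simp

theorem length_mul_min (cs : CoxeterSystem M W) (J : Set B) (z : W)
    (hz : ∀ w ∈ WJ cs J, cs.length z ≤ cs.length (w * z)) (w : W) (hw : w ∈ WJ cs J) :
    cs.length (w * z) = cs.length w + cs.length z := by
  refine WJ_induction' cs J (fun w => cs.length (w * z) = cs.length w + cs.length z) (by simp) ?_ w hw
  intro i hi w hw hlt ih
  have h1 := cs.length_simple_mul w i
  have h2 := cs.length_simple_mul (w * z) i
  rw [mul_assoc]
  rcases h2 with h2 | h2
  · omega
  · exfalso
    obtain ⟨ω, hr, rfl⟩ := exists_word cs w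
    obtain ⟨ζ, hr', rfl⟩ := exists_word cs z
    obtain ⟨j, hj, he⟩ := exchange_left cs (ω ++ ζ) _ (cs.isReflection_simple i)
      (by rw [wordProd_append]; omega)
    rw [List.eraseIdx_append, wordProd_append] at he
    split_ifs at he with hjω
    · rw [wordProd_append, ← mul_assoc] at he
      have := mul_right_cancel he
      have h3 := cs.length_wordProd_le (ω.eraseIdx j)
      rw [← this, List.length_eraseIdx_of_lt hjω] at h3
      have := hr.eq
      omega
    · rw [wordProd_append] at he
      have h3 := hz ((cs.wordProd ω)⁻¹ * cs.simple i * cs.wordProd ω)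
        (mul_mem (mul_mem (inv_mem hw) (simple_mem_WJ cs hi)) hw)
      have h4 : (cs.wordProd ω)⁻¹ * cs.simple i * cs.wordProd ω * cs.wordProd ζ =
          cs.wordProd (ζ.eraseIdx (j - ω.length)) := by
        rw [mul_assoc, mul_assoc, he]; group
      have h5 := cs.length_wordProd_le (ζ.eraseIdx (j - ω.length))
      have h6 : j - ω.length < ζ.length := by simp at hj; omega
      rw [List.length_eraseIdx_of_lt h6, ← h4] at h5
      have := hr'.eq
      omega

theorem exists_min (cs : CoxeterSystem M W) (J : Set B) (x : W) :
    ∃ w ∈ WJ cs J, ∃ z, x = w * z ∧ ∀ w' ∈ WJ cs J, cs.length z ≤ cs.length (w' * z) := by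
  obtain ⟨g, hg, hmin⟩ := exists_minimal_of_wellFoundedLT
    (fun n : ℕ => ∃ w ∈ WJ cs J, cs.length (w * x) = n) ⟨_, 1, one_mem _, rfl⟩
  obtain ⟨w, hw, hwx⟩ := hg
  refine ⟨w⁻¹, inv_mem hw, w * x, by group, fun w' hw' => ?_⟩
  rw [hwx]
  by_contra hlt
  push Not at hlt
  have := hmin ⟨w' * w, mul_mem hw' hw, rfl⟩ (by rw [mul_assoc]; exact hlt.le)
  rw [mul_assoc] at this
  omega

theorem cosetReps_min (cs : CoxeterSystem M W) (J : Set B) (z : W) (hz : z ∈ cosetReps cs J) :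
    ∀ w ∈ WJ cs J, cs.length z ≤ cs.length (w * z) := by
  obtain ⟨w, hw, z₀, rfl, hmin⟩ := exists_min cs J z
  suffices w = 1 by subst this; simpa using hmin
  by_contra hne
  obtain ⟨ω, hr, rfl, hJ⟩ := WJ_word cs J w hw
  cases ω with
  | nil => simp at hne
  | cons i ω =>
    have h1 := hz i (hJ i (by simp))
    have hm := WJ_wordProd_mem cs J ω fun j hj => hJ j (by simp [hj])
    have h2 := length_mul_min cs J z₀ hmin _ hw
    rw [h2, hr.eq, wordProd_cons, mul_assoc, simple_mul_simple_cancel_left,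
      length_mul_min cs J z₀ hmin _ hm] at h1
    have := cs.length_wordProd_le ω
    simp at h1
    omega

theorem length_mul_rep (cs : CoxeterSystem M W) (J : Set B) {w z : W} (hw : w ∈ WJ cs J)
    (hz : z ∈ cosetReps cs J) : cs.length (w * z) = cs.length w + cs.length z :=
  length_mul_min cs J z (cosetReps_min cs J z hz) w hw

theorem exists_decomp (cs : CoxeterSystem M W) (J : Set B) (x : W) :
    ∃ w ∈ WJ cs J, ∃ z ∈ cosetReps cs J, w * z = x := by
  obtain ⟨w, hw, z, rfl, h⟩ := exists_min cs J x
  refine ⟨w, hw, z, fun i hi => ?_, rfl⟩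
  have := h _ (simple_mem_WJ cs hi)
  have := cs.length_simple_mul z i
  omega

theorem decomp_unique (cs : CoxeterSystem M W) (J : Set B) {w w' z z' : W} (hw : w ∈ WJ cs J)
    (hw' : w' ∈ WJ cs J) (hz : z ∈ cosetReps cs J) (hz' : z' ∈ cosetReps cs J)
    (h : w * z = w' * z') : w = w' ∧ z = z' := by
  have e1 : (w'⁻¹ * w) * z = z' := by rw [mul_assoc, h]; group
  have e2 : (w⁻¹ * w') * z' = z := by rw [mul_assoc, ← h]; group
  have h1 := length_mul_rep cs J (mul_mem (inv_mem hw') hw) hz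
  have h2 := length_mul_rep cs J (mul_mem (inv_mem hw) hw') hz'
  rw [e1] at h1
  rw [e2] at h2
  have h3 : cs.length (w'⁻¹ * w) = 0 := by omega
  rw [cs.length_eq_zero_iff] at h3
  rw [h3, one_mul] at e1
  exact ⟨(inv_mul_eq_one.mp h3).symm, e1⟩

theorem rep_down (cs : CoxeterSystem M W) (J : Set B) {z : W} (hz : z ∈ cosetReps cs J) (i : B)
    (h : cs.length (z * cs.simple i) < cs.length z) : z * cs.simple i ∈ cosetReps cs J := by
  intro t ht
  have h1 := hz t ht
  have h2 := cs.length_mul_simple z i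
  have h3 := cs.length_mul_simple (cs.simple t * z) i
  have h4 := cs.length_simple_mul (z * cs.simple i) t
  rw [← mul_assoc] at h4 ⊢
  omega

theorem rep_up (cs : CoxeterSystem M W) (J : Set B) {u : W} (hu : u ∈ cosetReps cs J) (i : B)
    (h : cs.length u < cs.length (u * cs.simple i)) (hn : u * cs.simple i ∉ cosetReps cs J) :
    ∃ t ∈ J, u * cs.simple i = cs.simple t * u := by
  simp only [cosetReps, Set.mem_ofPred_eq] at hn
  push Not at hn
  obtain ⟨t, ht, hlt⟩ := hn
  refine ⟨t, ht, ?_⟩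
  have h1 := cs.length_simple_mul (u * cs.simple i) t
  obtain ⟨ω, hr, rfl⟩ := exists_word cs u
  have e : cs.wordProd (ω ++ [i]) = cs.wordProd ω * cs.simple i := by simp [wordProd_append]
  obtain ⟨j, hj, he⟩ := exchange_left cs (ω ++ [i]) _ (cs.isReflection_simple t) (by rw [e]; omega)
  rw [List.eraseIdx_append, e] at he
  split_ifs at he with hjω
  · exfalso
    rw [wordProd_append, wordProd_singleton, ← mul_assoc] at he
    have h2 := mul_right_cancel he
    have h3 := hu t ht
    rw [h2] at h3
    have h4 := cs.length_wordProd_le (ω.eraseIdx j)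
    rw [List.length_eraseIdx_of_lt hjω] at h4
    have := hr.eq
    omega
  · have : j - ω.length = 0 := by simp at hj; omega
    rw [this] at he
    simp only [List.eraseIdx_zero, List.tail_cons, List.append_nil] at he
    conv_rhs => rw [← he]
    simp

theorem rep_le (cs : CoxeterSystem M W) (J : Set B) {u w : W} (hu : u ∈ cosetReps cs J)
    (hw : w ∈ WJ cs J) : bruhatLE cs u (w * u) := by
  refine WJ_induction' cs J (fun w => bruhatLE cs u (w * u)) (by simpa using bruhat_refl cs u) ?_ w hw
  intro i hi w hw hlt ih
  refine bruhat_trans cs ih ?_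
  have h := length_mul_rep cs J hw hu
  have h' := length_mul_rep cs J (mul_mem (simple_mem_WJ cs hi) hw) hu
  have := bruhat_down_left cs (x := cs.simple i * w * u) i
    (by rw [mul_assoc, simple_mul_simple_cancel_left, ← mul_assoc]; omega)
  rwa [mul_assoc, simple_mul_simple_cancel_left, ← mul_assoc] at this

theorem one_mem_reps (cs : CoxeterSystem M W) (J : Set B) : (1 : W) ∈ cosetReps cs J := by
  intro i _; simp

theorem simple_notMem_reps (cs : CoxeterSystem M W) {J : Set B} {i : B} (hi : i ∈ J) :
    cs.simple i ∉ cosetReps cs J := by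
  intro h
  have := h i hi
  simp at this

theorem neg_one_pow_length (cs : CoxeterSystem M W) (w w' : W) :
    (-1 : Polynomial ℤ) ^ cs.length (w * w') = (-1) ^ cs.length w * (-1) ^ cs.length w' := by
  rw [← pow_add, neg_one_pow_eq_pow_mod_two, cs.length_mul_mod_two, ← neg_one_pow_eq_pow_mod_two]

end Cox

section KL

open CoxeterSystem

variable [Fintype W] (cs : CoxeterSystem M W) (J : Set B)

theorem R_down {y : Polynomial ℤ} (K : ParabolicKL cs J y) {u v : W} (hu : u ∈ cosetReps cs J)
    (hv : v ∈ cosetReps cs J) (i : B) (hvi : cs.length (v * cs.simple i) < cs.length v)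
    (hui : cs.length (u * cs.simple i) < cs.length u) :
    K.R u v = K.R (u * cs.simple i) (v * cs.simple i) := by
  have hu' := rep_down cs J hu i hui
  have hv' := rep_down cs J hv i hvi
  by_cases hle : bruhatLE cs u v
  · by_cases he : u = v
    · subst he; rw [K.R_refl _ hu, K.R_refl _ hu']
    · exact (K.R_rec u hu v hv hle he i hvi).1 hui
  · rw [K.R_eq_zero u hu v hv hle, K.R_eq_zero _ hu' _ hv']
    intro h
    apply hle
    have := bruhat_mul_mul cs i (by simpa using hui) (by simpa using hvi) h
    simpa using this

theorem R_up {y : Polynomial ℤ} (K : ParabolicKL cs J y) {u v : W} (hu : u ∈ cosetReps cs J)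
    (hv : v ∈ cosetReps cs J) (i : B) (hvi : cs.length (v * cs.simple i) < cs.length v)
    (hui : cs.length u < cs.length (u * cs.simple i)) (hu' : u * cs.simple i ∈ cosetReps cs J) :
    K.R u v = (Polynomial.X - 1) * K.R u (v * cs.simple i)
      + Polynomial.X * K.R (u * cs.simple i) (v * cs.simple i) := by
  have hv' := rep_down cs J hv i hvi
  by_cases hle : bruhatLE cs u v
  · by_cases he : u = v
    · subst he; omega
    · exact (K.R_rec u hu v hv hle he i hvi).2.1 hui hu'
  · have hd := bruhat_down_right cs i hvi
    rw [K.R_eq_zero u hu v hv hle, K.R_eq_zero u hu _ hv' fun h => hle (bruhat_trans cs h hd),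
      K.R_eq_zero _ hu' _ hv', mul_zero, mul_zero, add_zero]
    intro h
    apply hle
    have h1 := bruhat_down_right cs (x := u * cs.simple i) i (by simpa using hui)
    rw [simple_mul_simple_cancel_right] at h1
    exact bruhat_trans cs h1 (bruhat_trans cs h hd)

theorem R_stuck {y : Polynomial ℤ} (K : ParabolicKL cs J y) {u v : W} (hu : u ∈ cosetReps cs J)
    (hv : v ∈ cosetReps cs J) (i : B) (hvi : cs.length (v * cs.simple i) < cs.length v)
    (hui : cs.length u < cs.length (u * cs.simple i)) (hu' : u * cs.simple i ∉ cosetReps cs J) :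
    K.R u v = (Polynomial.X - 1 - y) * K.R u (v * cs.simple i) := by
  have hv' := rep_down cs J hv i hvi
  by_cases hle : bruhatLE cs u v
  · by_cases he : u = v
    · subst he; omega
    · exact (K.R_rec u hu v hv hle he i hvi).2.2 hui hu'
  · have hd := bruhat_down_right cs i hvi
    rw [K.R_eq_zero u hu v hv hle, K.R_eq_zero u hu _ hv' fun h => hle (bruhat_trans cs h hd),
      mul_zero]

theorem mem_reps_empty (x : W) : x ∈ cosetReps cs (∅ : Set B) := by
  intro i hi; exact absurd hi (Set.notMem_empty i)

theorem le_one (x : W) (h : bruhatLE cs x 1) : x = 1 := by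
  have := bruhat_length cs h
  rw [length_one] at this
  exact cs.length_eq_zero_iff.mp (by omega)

theorem R_one {y : Polynomial ℤ} (K : ParabolicKL cs J y) {u : W} (hu : u ∈ cosetReps cs J) :
    K.R u 1 = if u = 1 then 1 else 0 := by
  split_ifs with h
  · subst h; exact K.R_refl _ hu
  · exact K.R_eq_zero _ hu _ (one_mem_reps cs J) fun h' => h (le_one cs u h')

/-- The parabolic subgroup as a finset. -/
noncomputable abbrev WJf : Finset W := Finset.univ.filter (fun w => w ∈ WJ cs J)

variable {y₀ : Polynomial ℤ} (okl : ParabolicKL cs (∅ : Set B) y₀)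

noncomputable def fs (u x : W) : Polynomial ℤ :=
  ∑ w ∈ WJf cs J, (-Polynomial.X) ^ cs.length w * okl.R (w * u) x

theorem fs_down {u : W} (hu : u ∈ cosetReps cs J) (i : B)
    (hui : cs.length (u * cs.simple i) < cs.length u) (x : W)
    (hx : cs.length (x * cs.simple i) < cs.length x) :
    fs cs J okl u x = fs cs J okl (u * cs.simple i) (x * cs.simple i) := by
  have hu' := rep_down cs J hu i hui
  refine Finset.sum_congr rfl fun w hw => ?_
  have hw' : w ∈ WJ cs J := (Finset.mem_filter.mp hw).2
  have h1 := length_mul_rep cs J hw' hu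
  have h2 := length_mul_rep cs J hw' hu'
  rw [R_down cs ∅ okl (mem_reps_empty cs _) (mem_reps_empty cs _) i hx
    (by rw [mul_assoc]; omega), mul_assoc]

theorem fs_up {u : W} (hu : u ∈ cosetReps cs J) (i : B)
    (hui : cs.length u < cs.length (u * cs.simple i)) (hu' : u * cs.simple i ∈ cosetReps cs J) (x : W)
    (hx : cs.length (x * cs.simple i) < cs.length x) :
    fs cs J okl u x = (Polynomial.X - 1) * fs cs J okl u (x * cs.simple i)
      + Polynomial.X * fs cs J okl (u * cs.simple i) (x * cs.simple i) := by
  unfold fs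
  rw [Finset.mul_sum, Finset.mul_sum, ← Finset.sum_add_distrib]
  refine Finset.sum_congr rfl fun w hw => ?_
  have hw' : w ∈ WJ cs J := (Finset.mem_filter.mp hw).2
  have h1 := length_mul_rep cs J hw' hu
  have h2 := length_mul_rep cs J hw' hu'
  rw [R_up cs ∅ okl (mem_reps_empty cs _) (mem_reps_empty cs _) i hx
    (by rw [mul_assoc]; omega) (mem_reps_empty cs _), mul_assoc w]
  ring

theorem sum_WJ_mul (g : W → Polynomial ℤ) {t : B} (ht : t ∈ J) :
    ∑ w ∈ WJf cs J, g (w * cs.simple t) = ∑ w ∈ WJf cs J, g w := by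
  have hm : ∀ w ∈ WJf cs J, w * cs.simple t ∈ WJf cs J := fun w hw =>
    Finset.mem_filter.mpr ⟨Finset.mem_univ _,
      mul_mem (Finset.mem_filter.mp hw).2 (simple_mem_WJ cs ht)⟩
  refine Finset.sum_nbij' (· * cs.simple t) (· * cs.simple t) hm hm ?_ ?_ ?_ <;> simp

theorem fs_stuck {u : W} (hu : u ∈ cosetReps cs J) (i : B)
    (hui : cs.length u < cs.length (u * cs.simple i)) (hu' : u * cs.simple i ∉ cosetReps cs J) (x : W)
    (hx : cs.length (x * cs.simple i) < cs.length x) :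
    fs cs J okl u x = - fs cs J okl u (x * cs.simple i) := by
  obtain ⟨t, ht, htu⟩ := rep_up cs J hu i hui hu'
  set a : W → Polynomial ℤ := fun w => (-Polynomial.X) ^ cs.length w * okl.R (w * u) x with ha
  set b : W → Polynomial ℤ :=
    fun w => (-Polynomial.X) ^ cs.length w * okl.R (w * u) (x * cs.simple i) with hb
  have key : ∀ w ∈ WJ cs J, cs.length w < cs.length (w * cs.simple t) →
      a w + a (w * cs.simple t) = -(b w + b (w * cs.simple t)) := by
    intro w hw hlt
    have h1 := length_mul_rep cs J hw hu
    have h2 := length_mul_rep cs J (mul_mem hw (simple_mem_WJ cs ht)) hu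
    have e1 : w * u * cs.simple i = w * cs.simple t * u := by
      rw [mul_assoc, htu, mul_assoc]
    have e2 : w * cs.simple t * u * cs.simple i = w * u := by
      rw [← e1]; simp
    have r1 := R_up cs ∅ okl (mem_reps_empty cs (w * u)) (mem_reps_empty cs x) i hx
      (by rw [e1]; omega) (mem_reps_empty cs _)
    have r2 := R_down cs ∅ okl (mem_reps_empty cs (w * cs.simple t * u)) (mem_reps_empty cs x) i hx
      (by rw [e2]; omega)
    have hl : cs.length (w * cs.simple t) = cs.length w + 1 := by
      have := cs.length_mul_simple w t; omega
    simp only [ha, hb]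
    rw [r1, r2, e1, e2, hl, pow_succ]
    ring
  have key' : ∀ w ∈ WJf cs J, a w + a (w * cs.simple t) = -(b w + b (w * cs.simple t)) := by
    intro w hw
    have hw' : w ∈ WJ cs J := (Finset.mem_filter.mp hw).2
    rcases cs.length_mul_simple w t with h | h
    · exact key w hw' (by omega)
    · have := key (w * cs.simple t) (mul_mem hw' (simple_mem_WJ cs ht))
        (by rw [simple_mul_simple_cancel_right]; omega)
      rw [simple_mul_simple_cancel_right] at this
      rw [add_comm, this, add_comm]
  have hsum := Finset.sum_congr rfl key'
  rw [Finset.sum_add_distrib, Finset.sum_neg_distrib, Finset.sum_add_distrib,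
    sum_WJ_mul cs J a ht, sum_WJ_mul cs J b ht] at hsum
  change ∑ w ∈ WJf cs J, a w = - ∑ w ∈ WJf cs J, b w
  have h2 : (2 : Polynomial ℤ) ≠ 0 := two_ne_zero
  apply mul_left_cancel₀ h2
  linear_combination hsum

theorem fs_rec {u : W} (hu : u ∈ cosetReps cs J) (i : B) :
    ∃ a b : Polynomial ℤ, ∃ u' ∈ cosetReps cs J, ∀ x : W,
      cs.length (x * cs.simple i) < cs.length x →
      fs cs J okl u x = a * fs cs J okl u (x * cs.simple i)
        + b * fs cs J okl u' (x * cs.simple i) := by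
  rcases cs.length_mul_simple u i with h | h
  · by_cases hu' : u * cs.simple i ∈ cosetReps cs J
    · exact ⟨_, _, _, hu', fun x hx => fs_up cs J okl hu i (by omega) hu' x hx⟩
    · refine ⟨-1, 0, u, hu, fun x hx => ?_⟩
      rw [fs_stuck cs J okl hu i (by omega) hu' x hx]; ring
  · refine ⟨0, 1, _, rep_down cs J hu i (by omega), fun x hx => ?_⟩
    rw [fs_down cs J okl hu i (by omega) x hx]; ring

theorem fs_one {u : W} (hu : u ∈ cosetReps cs J) :
    fs cs J okl u 1 = if u = 1 then 1 else 0 := by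
  have hz : ∀ w ∈ WJf cs J, w ≠ 1 → (-Polynomial.X) ^ cs.length w * okl.R (w * u) 1 = 0 := by
    intro w hw hne
    rw [R_one cs ∅ okl (mem_reps_empty cs _), if_neg, mul_zero]
    intro h
    exact hne (decomp_unique cs J (Finset.mem_filter.mp hw).2 (one_mem _) hu (one_mem_reps cs J)
      (h.trans (one_mul 1).symm)).1
  unfold fs
  rw [Finset.sum_eq_single 1 hz (fun h => absurd
    (Finset.mem_filter.mpr ⟨Finset.mem_univ _, one_mem _⟩) h),
    R_one cs ∅ okl (mem_reps_empty cs _)]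
  simp

theorem fs_anti (n : ℕ) : ∀ x : W, cs.length x = n → ∀ t ∈ J,
    cs.length x < cs.length (cs.simple t * x) → ∀ u ∈ cosetReps cs J,
    fs cs J okl u (cs.simple t * x) = - fs cs J okl u x := by
  induction n with
  | zero =>
    intro x hx t ht hlt u hu
    rw [cs.length_eq_zero_iff] at hx
    subst hx
    rw [mul_one]
    have hs : cs.length (cs.simple t * cs.simple t) < cs.length (cs.simple t) := by simp
    have hnt : u ≠ cs.simple t := fun h => simple_notMem_reps cs ht (h ▸ hu)
    have hnt' : u * cs.simple t ≠ 1 := fun h => hnt (by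
      rw [mul_eq_one_iff_eq_inv, inv_simple] at h; exact h)
    rcases cs.length_mul_simple u t with h | h
    · by_cases hu' : u * cs.simple t ∈ cosetReps cs J
      · rw [fs_up cs J okl hu t (by omega) hu' _ hs, simple_mul_simple_self,
          fs_one cs J okl hu, fs_one cs J okl hu', if_neg hnt', if_neg]
        · simp
        · rintro rfl
          rw [one_mul] at hu'
          exact simple_notMem_reps cs ht hu'
      · rw [fs_stuck cs J okl hu t (by omega) hu' _ hs, simple_mul_simple_self]
    · have hu' := rep_down cs J hu t (by omega)
      rw [fs_down cs J okl hu t (by omega) _ hs, simple_mul_simple_self, fs_one cs J okl hu,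
        fs_one cs J okl hu', if_neg hnt', if_neg]
      · simp
      · rintro rfl
        simp at h
  | succ n ih =>
    intro x hx t ht hlt u hu
    have hne : x ≠ 1 := by rintro rfl; simp at hx
    obtain ⟨i, hi⟩ := cs.exists_rightDescent_of_ne_one hne
    unfold IsRightDescent at hi
    have h1 := cs.length_mul_simple x i
    have h2 := cs.length_simple_mul x t
    have h3 := cs.length_mul_simple (cs.simple t * x) i
    have h4 := cs.length_simple_mul (x * cs.simple i) t
    rw [← mul_assoc] at h4
    obtain ⟨a, b, u', hu', hrec⟩ := fs_rec cs J okl hu i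
    rw [hrec (cs.simple t * x) (by omega), hrec x hi, mul_assoc,
      ih (x * cs.simple i) (by omega) t ht (by rw [← mul_assoc]; omega) u hu,
      ih (x * cs.simple i) (by omega) t ht (by rw [← mul_assoc]; omega) u' hu']
    ring

theorem fs_WJ {u : W} (hu : u ∈ cosetReps cs J) (x w : W) (hw : w ∈ WJ cs J) :
    fs cs J okl u (w * x) = (-1) ^ cs.length w * fs cs J okl u x := by
  refine WJ_induction cs J (fun w => fs cs J okl u (w * x) = (-1) ^ cs.length w * fs cs J okl u x)
    (by simp) ?_ w hw
  intro i hi w hw ih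
  have : fs cs J okl u (cs.simple i * (w * x)) = - fs cs J okl u (w * x) := by
    rcases cs.length_simple_mul (w * x) i with h | h
    · exact fs_anti cs J okl _ _ rfl i hi (by omega) u hu
    · have := fs_anti cs J okl _ (cs.simple i * (w * x)) rfl i hi
        (by rw [simple_mul_simple_cancel_left]; omega) u hu
      rw [simple_mul_simple_cancel_left] at this
      rw [this, neg_neg]
  rw [mul_assoc, this, ih, neg_one_pow_length]
  simp

variable (pkl : ParabolicKL cs J Polynomial.X)

theorem fs_eq_R (n : ℕ) : ∀ z ∈ cosetReps cs J, cs.length z = n → ∀ u ∈ cosetReps cs J,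
    fs cs J okl u z = pkl.R u z := by
  induction n with
  | zero =>
    intro z hz hl u hu
    rw [cs.length_eq_zero_iff] at hl
    subst hl
    rw [fs_one cs J okl hu, R_one cs J pkl hu]
  | succ n ih =>
    intro z hz hl u hu
    have hne : z ≠ 1 := by rintro rfl; simp at hl
    obtain ⟨i, hi⟩ := cs.exists_rightDescent_of_ne_one hne
    unfold IsRightDescent at hi
    have h1 := cs.length_mul_simple z i
    have hz' := rep_down cs J hz i hi
    have IH := ih _ hz' (by omega)
    rcases cs.length_mul_simple u i with h | h
    · by_cases hu' : u * cs.simple i ∈ cosetReps cs J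
      · rw [fs_up cs J okl hu i (by omega) hu' z hi, R_up cs J pkl hu hz i hi (by omega) hu',
          IH _ hu, IH _ hu']
      · rw [fs_stuck cs J okl hu i (by omega) hu' z hi,
          R_stuck cs J pkl hu hz i hi (by omega) hu', IH _ hu]
        ring
    · rw [fs_down cs J okl hu i (by omega) z hi, R_down cs J pkl hu hz i hi (by omega),
        IH _ (rep_down cs J hu i (by omega))]

/-! ### Polynomial reflection -/

theorem invPoly_eq {N : ℕ} {P : Polynomial ℤ} (h : P.natDegree ≤ N) :
    invPoly N P = Polynomial.reflect N P := by
  unfold invPoly Polynomial.reverse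
  have := Polynomial.reflect_mul (1 : Polynomial ℤ) P (F := N - P.natDegree) (G := P.natDegree)
    (by simp) le_rfl
  rw [one_mul, Nat.sub_add_cancel h] at this
  rw [this, Polynomial.reflect_one]

theorem reflect_add_left {N k : ℕ} {P : Polynomial ℤ} (h : P.natDegree ≤ N) :
    Polynomial.reflect (k + N) P = Polynomial.X ^ k * Polynomial.reflect N P := by
  have := Polynomial.reflect_mul (1 : Polynomial ℤ) P (F := k) (G := N) (by simp) h
  rw [one_mul] at this
  rw [this, Polynomial.reflect_one]

theorem eq_zero_of_reflect {N : ℕ} {D : Polynomial ℤ} (h : Polynomial.reflect N D = D)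
    (hd : 2 * D.natDegree + 1 ≤ N) : D = 0 := by
  ext i
  by_cases hi : D.natDegree < i
  · simp [Polynomial.coeff_eq_zero_of_natDegree_lt hi]
  · rw [← h, Polynomial.coeff_reflect, Polynomial.revAt_le (by omega),
      Polynomial.coeff_eq_zero_of_natDegree_lt (by omega)]
    simp

theorem natDegree_P_le {y : Polynomial ℤ} (K : ParabolicKL cs J y) {u v : W}
    (hu : u ∈ cosetReps cs J) (hv : v ∈ cosetReps cs J) :
    (K.P u v).natDegree ≤ cs.length v - cs.length u := by
  by_cases hle : bruhatLE cs u v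
  · by_cases he : u = v
    · subst he; rw [K.P_refl _ hu]; simp
    · have := K.P_degree u hu v hv hle he
      omega
  · rw [K.P_eq_zero u hu v hv hle]; simp

/-- The right hand side of the theorem. -/
noncomputable def Qs (u v : W) : Polynomial ℤ :=
  ∑ w ∈ WJf cs J, (-1 : Polynomial ℤ) ^ cs.length w * okl.P (w * u) v

theorem Qs_zero {u v : W} (hu : u ∈ cosetReps cs J) (h : ¬ bruhatLE cs u v) :
    Qs cs J okl u v = 0 := by
  refine Finset.sum_eq_zero fun w hw => ?_
  rw [okl.P_eq_zero _ (mem_reps_empty cs _) _ (mem_reps_empty cs _), mul_zero]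
  exact fun h' => h (bruhat_trans cs (rep_le cs J hu (Finset.mem_filter.mp hw).2) h')

theorem Qs_self {v : W} (hv : v ∈ cosetReps cs J) : Qs cs J okl v v = 1 := by
  unfold Qs
  rw [Finset.sum_eq_single 1]
  · simp [okl.P_refl v (mem_reps_empty cs _)]
  · intro w hw hne
    rw [okl.P_eq_zero _ (mem_reps_empty cs _) _ (mem_reps_empty cs _), mul_zero]
    intro h
    have h1 := bruhat_length cs h
    rw [length_mul_rep cs J (Finset.mem_filter.mp hw).2 hv] at h1
    exact hne (cs.length_eq_zero_iff.mp (by omega))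
  · intro h; exact absurd (Finset.mem_filter.mpr ⟨Finset.mem_univ _, one_mem _⟩) h

theorem Qs_degree {u v : W} (hu : u ∈ cosetReps cs J) (hv : v ∈ cosetReps cs J)
    (hle : bruhatLE cs u v) (hne : u ≠ v) :
    2 * (Qs cs J okl u v).natDegree + 1 ≤ cs.length v - cs.length u := by
  have hlt := bruhat_length_lt cs hle hne
  suffices (Qs cs J okl u v).natDegree ≤ (cs.length v - cs.length u - 1) / 2 by omega
  refine Polynomial.natDegree_sum_le_of_forall_le _ _ fun w hw => ?_
  have hw' : w ∈ WJ cs J := (Finset.mem_filter.mp hw).2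
  have h1 : ((-1 : Polynomial ℤ) ^ cs.length w * okl.P (w * u) v).natDegree
      ≤ (okl.P (w * u) v).natDegree := by
    rcases neg_one_pow_eq_or (Polynomial ℤ) (cs.length w) with h | h <;> rw [h] <;> simp
  refine h1.trans ?_
  by_cases hl : bruhatLE cs (w * u) v
  · have hne' : w * u ≠ v := fun h => hne
      (decomp_unique cs J hw' (one_mem _) hu hv (h.trans (one_mul v).symm)).2
    have := okl.P_degree _ (mem_reps_empty cs _) _ (mem_reps_empty cs _) hl hne'
    have := length_mul_rep cs J hw' hu
    omega
  · rw [okl.P_eq_zero _ (mem_reps_empty cs _) _ (mem_reps_empty cs _) hl]; simp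

theorem P_inv_full (y v : W) (k : ℕ) (hk : bruhatLE cs y v → k = cs.length v - cs.length y) :
    Polynomial.reflect k (okl.P y v) = ∑ z : W, okl.R y z * okl.P z v := by
  have hm := mem_reps_empty cs (B := B)
  by_cases hle : bruhatLE cs y v
  · rw [hk hle, ← invPoly_eq (natDegree_P_le cs ∅ okl (hm y) (hm v)),
      okl.P_inversion y (hm y) v (hm v) hle]
    refine Finset.sum_subset (Finset.subset_univ _) fun z _ hz => ?_
    simp only [Finset.mem_filter, Finset.mem_univ, true_and, hm z] at hz
    by_cases h1 : bruhatLE cs y z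
    · rw [okl.P_eq_zero z (hm z) v (hm v) fun h2 => hz ⟨h1, h2⟩, mul_zero]
    · rw [okl.R_eq_zero y (hm y) z (hm z) h1, zero_mul]
  · rw [okl.P_eq_zero y (hm y) v (hm v) hle, Polynomial.reflect_zero]
    refine (Finset.sum_eq_zero fun z _ => ?_).symm
    by_cases h1 : bruhatLE cs y z
    · rw [okl.P_eq_zero z (hm z) v (hm v) fun h2 => hle (bruhat_trans cs h1 h2), mul_zero]
    · rw [okl.R_eq_zero y (hm y) z (hm z) h1, zero_mul]

theorem sum_decomp (g : W → Polynomial ℤ) :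
    ∑ x : W, g x =
      ∑ z ∈ Finset.univ.filter (fun z => z ∈ cosetReps cs J), ∑ w ∈ WJf cs J, g (w * z) := by
  rw [← Finset.sum_product']
  symm
  refine Finset.sum_bij (fun p _ => p.2 * p.1) (fun _ _ => Finset.mem_univ _) ?_ ?_ ?_
  · rintro ⟨z, w⟩ h ⟨z', w'⟩ h' he
    simp only [Finset.mem_product, Finset.mem_filter, Finset.mem_univ, true_and] at h h' he
    obtain ⟨h1, h2⟩ := decomp_unique cs J h.2 h'.2 h.1 h'.1 he
    rw [h1, h2]
  · intro x _
    obtain ⟨w, hw, z, hz, rfl⟩ := exists_decomp cs J x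
    exact ⟨(z, w), by simp [hw, hz], rfl⟩
  · intro _ _; rfl

theorem Qs_inv {u v : W} (hu : u ∈ cosetReps cs J) (hv : v ∈ cosetReps cs J) :
    Polynomial.reflect (cs.length v - cs.length u) (Qs cs J okl u v) =
      ∑ z ∈ Finset.univ.filter (fun z => z ∈ cosetReps cs J), pkl.R u z * Qs cs J okl z v := by
  have hm := mem_reps_empty cs (B := B)
  have hrefl_sum : ∀ (N : ℕ) (s : Finset W) (g : W → Polynomial ℤ),
      Polynomial.reflect N (∑ w ∈ s, g w) = ∑ w ∈ s, Polynomial.reflect N (g w) := by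
    intro N s g
    induction s using Finset.induction_on with
    | empty => simp
    | insert a s ha ih => rw [Finset.sum_insert ha, Finset.sum_insert ha, Polynomial.reflect_add, ih]
  have hterm : ∀ w ∈ WJf cs J,
      Polynomial.reflect (cs.length v - cs.length u)
        ((-1 : Polynomial ℤ) ^ cs.length w * okl.P (w * u) v) =
      ∑ z : W, ((-Polynomial.X) ^ cs.length w * okl.R (w * u) z) * okl.P z v := by
    intro w hw
    have hw' : w ∈ WJ cs J := (Finset.mem_filter.mp hw).2
    have hl := length_mul_rep cs J hw' hu
    have hC : ((-1 : Polynomial ℤ) ^ cs.length w) = Polynomial.C ((-1 : ℤ) ^ cs.length w) := by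
      simp
    have hfull := P_inv_full cs okl (w * u) v (cs.length v - cs.length (w * u)) fun _ => rfl
    have hX : Polynomial.reflect (cs.length v - cs.length u) (okl.P (w * u) v) =
        Polynomial.X ^ cs.length w *
          Polynomial.reflect (cs.length v - cs.length (w * u)) (okl.P (w * u) v) := by
      by_cases hle : bruhatLE cs (w * u) v
      · have h1 := bruhat_length cs hle
        rw [← reflect_add_left (natDegree_P_le cs ∅ okl (hm _) (hm _))]
        congr 1
        omega
      · rw [okl.P_eq_zero _ (hm _) _ (hm _) hle]; simp
    rw [hC, Polynomial.reflect_C_mul, hX, hfull, ← hC, ← mul_assoc, ← mul_pow, neg_one_mul,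
      Finset.mul_sum]
    refine Finset.sum_congr rfl fun z _ => ?_
    ring
  unfold Qs
  rw [hrefl_sum, Finset.sum_congr rfl hterm, Finset.sum_comm]
  have h2 : ∀ z : W, ∑ w ∈ WJf cs J, ((-Polynomial.X) ^ cs.length w * okl.R (w * u) z) * okl.P z v
      = fs cs J okl u z * okl.P z v := by
    intro z; unfold fs; rw [Finset.sum_mul]
  simp only [h2]
  rw [sum_decomp cs J]
  refine Finset.sum_congr rfl fun z hz => ?_
  have hz' : z ∈ cosetReps cs J := (Finset.mem_filter.mp hz).2
  rw [Finset.mul_sum]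
  refine Finset.sum_congr rfl fun w hw => ?_
  rw [fs_WJ cs J okl hu z w (Finset.mem_filter.mp hw).2, fs_eq_R cs J okl pkl _ z hz' rfl u hu]
  ring

theorem P_eq_Qs (n : ℕ) : ∀ u v : W, u ∈ cosetReps cs J → v ∈ cosetReps cs J →
    cs.length v - cs.length u = n → pkl.P u v = Qs cs J okl u v := by
  induction n using Nat.strong_induction_on with
  | _ n ih =>
    intro u v hu hv hn
    by_cases hle : bruhatLE cs u v
    swap
    · rw [pkl.P_eq_zero u hu v hv hle, Qs_zero cs J okl hu hle]
    by_cases hne : u = v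
    · subst hne; rw [pkl.P_refl u hu, Qs_self cs J okl hu]
    have h1 := pkl.P_inversion u hu v hv hle
    have hd := natDegree_P_le cs J pkl hu hv
    rw [invPoly_eq hd] at h1
    have h2 := Qs_inv cs J okl pkl hu hv
    have h3 : ∑ z ∈ Finset.univ.filter
          (fun z => z ∈ cosetReps cs J ∧ bruhatLE cs u z ∧ bruhatLE cs z v), pkl.R u z * pkl.P z v =
        ∑ z ∈ Finset.univ.filter (fun z => z ∈ cosetReps cs J), pkl.R u z * pkl.P z v := by
      refine Finset.sum_subset (fun z hz => ?_) fun z hz hz' => ?_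
      · simp only [Finset.mem_filter, Finset.mem_univ, true_and] at hz ⊢
        exact hz.1
      · simp only [Finset.mem_filter, Finset.mem_univ, true_and] at hz hz'
        by_cases h1 : bruhatLE cs u z
        · rw [pkl.P_eq_zero z hz v hv fun h2 => hz' ⟨hz, h1, h2⟩, mul_zero]
        · rw [pkl.R_eq_zero u hu z hz h1, zero_mul]
    rw [h3] at h1
    have hsub : Polynomial.reflect (cs.length v - cs.length u) (pkl.P u v - Qs cs J okl u v) =
        pkl.P u v - Qs cs J okl u v := by
      rw [Polynomial.reflect_sub, h1, h2, ← Finset.sum_sub_distrib,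
        Finset.sum_eq_single_of_mem u (Finset.mem_filter.mpr ⟨Finset.mem_univ _, hu⟩),
        pkl.R_refl u hu, one_mul, one_mul]
      intro z hz hzu
      have hz' : z ∈ cosetReps cs J := (Finset.mem_filter.mp hz).2
      by_cases hl1 : bruhatLE cs u z
      · have hlt := bruhat_length_lt cs hl1 (Ne.symm hzu)
        have hlt' := bruhat_length_lt cs hle hne
        rw [ih (cs.length v - cs.length z) (by omega) z v hz' hv rfl, sub_self]
      · rw [pkl.R_eq_zero u hu z hz' hl1]; simp
    have hdeg : 2 * (pkl.P u v - Qs cs J okl u v).natDegree + 1 ≤ cs.length v - cs.length u := by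
      have a := pkl.P_degree u hu v hv hle hne
      have b := Qs_degree cs J okl hu hv hle hne
      have c := Polynomial.natDegree_sub_le (pkl.P u v) (Qs cs J okl u v)
      rcases le_max_iff.mp c with c | c <;> omega
    exact sub_eq_zero.mp (eq_zero_of_reflect hsub hdeg)

end KL

end KLProof

/-- Deodhar's parabolic Kazhdan–Lusztig polynomials of type `q`
satisfy `P^{J,q}_{u,v} = ∑_{w ∈ W_J} (-1)^{ℓ(w)} P_{wu, v}` for all `u, v ∈ ᴶW`,
where the `P_{x,w}` are the ordinary Kazhdan–Lusztig polynomials. -/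
theorem stmt13 [Fintype W] (cs : CoxeterSystem M W) (J : Set B)
    (y₀ : Polynomial ℤ)
    (pkl : ParabolicKL cs J Polynomial.X)    -- type `q` parabolic KL polynomials
    (okl : ParabolicKL cs (∅ : Set B) y₀)    -- ordinary KL polynomials
    (u v : W) (hu : u ∈ cosetReps cs J) (hv : v ∈ cosetReps cs J) :
    pkl.P u v
      = ∑ w ∈ Finset.univ.filter (fun w => w ∈ Subgroup.closure (cs.simple '' J)),
          (-1 : Polynomial ℤ) ^ cs.length w * okl.P (w * u) v := by
  exact KLProof.P_eq_Qs cs J okl pkl _ u v hu hv rfl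
end
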